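/- Weighted sum of 2^{ω(N)−ω(gcd(N,M))}: Let R, M ∈ ℳ with deg M ≤ deg R, let k be a non-negative integer, and let z be an integer-valued function of R with z ∼ deg R as deg R → ∞. Then, as deg R → ∞, Σ_{N ∈ ℳ, deg N ≤ z, gcd(N,R)=1} (2^{ω(N) − ω(gcd(N,M))}/|N|) · (z − deg N)^k = ((1 − q^{-1})/((k+2)(k+1))) · Π_{P | MR} ((1 − |P|^{-1})/(1 + |P|^{-1})) · Π_{P | M, P ∤ R} (1/(1 − |P|^{-1})) · ( z^{k+2} + O_k(z^{k+1} log(deg R)) ), where the products are over monic prime divisors P. -/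

import Mathlib

open scoped BigOperators
open Filter

noncomputable section

namespace FFEH

variable {Fq : Type} [Field Fq] [Fintype Fq]

open Classical in
/-- The absolute value `|A| = q ^ deg A` of a polynomial `A ∈ 𝔽_q[T]`, with `|0| = 0`. -/
def absP (A : Polynomial Fq) : ℝ :=
  if A = 0 then 0 else (Fintype.card Fq : ℝ) ^ A.natDegree

/-- Monic irreducible ("prime") polynomials. -/
def IsMonicPrime (P : Polynomial Fq) : Prop := P.Monic ∧ Irreducible P

/-- A Dirichlet character of modulus `R` on `𝔽_q[T]`. -/
structure IsDirichletChar (R : Polynomial Fq) (χ : Polynomial Fq → ℂ) : Prop where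
  map_one' : χ 1 = 1
  map_mul' : ∀ A B : Polynomial Fq, χ (A * B) = χ A * χ B
  congr' : ∀ A B : Polynomial Fq, R ∣ A - B → χ A = χ B
  eq_zero_iff' : ∀ A : Polynomial Fq, χ A = 0 ↔ ¬ IsCoprime A R

/-- A primitive Dirichlet character of modulus `R`: one induced by no character of
modulus of strictly smaller degree. -/
def IsPrimitiveChar (R : Polynomial Fq) (χ : Polynomial Fq → ℂ) : Prop :=
  IsDirichletChar R χ ∧
    ∀ S : Polynomial Fq, S.Monic → S ∣ R → S.natDegree < R.natDegree →
      ¬ ∃ χ₁ : Polynomial Fq → ℂ, IsDirichletChar S χ₁ ∧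
        ∀ A : Polynomial Fq, IsCoprime A R → χ A = χ₁ A

/-- An even character: trivial on the nonzero constants. -/
def IsEvenChar (χ : Polynomial Fq → ℂ) : Prop :=
  ∀ a : Fq, a ≠ 0 → χ (Polynomial.C a) = 1

/-- `φ*(R)`: the number of primitive characters of modulus `R`. -/
def numPrimChars (R : Polynomial Fq) : ℕ :=
  Set.ncard {χ : Polynomial Fq → ℂ | IsPrimitiveChar R χ}

/-- The Euler totient `φ(R) = #(𝔽_q[T]/(R))ˣ`. -/
def phiP (R : Polynomial Fq) : ℕ :=
  Nat.card ((Polynomial Fq ⧸ Ideal.span {R})ˣ)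

/-- `ω(A)`: the number of distinct monic prime divisors of `A`. -/
def omegaP (A : Polynomial Fq) : ℕ :=
  Set.ncard {P : Polynomial Fq | IsMonicPrime P ∧ P ∣ A}

open Classical in
/-- The Möbius function on monic polynomials. -/
def muP (A : Polynomial Fq) : ℤ :=
  if Squarefree A then (-1) ^ omegaP A else 0

/-- `d_k(A)`: the number of ways of writing `A` as an ordered product of `k` monic
polynomials. -/
def dk (k : ℕ) (A : Polynomial Fq) : ℕ :=
  Set.ncard {v : Fin k → Polynomial Fq | (∀ i, (v i).Monic) ∧ ∏ i, v i = A}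

/-- `A ∈ 𝒮_ℳ(X)`: `A` is monic and all its prime divisors have degree at most `X`. -/
def SmoothM (X : ℕ) (A : Polynomial Fq) : Prop :=
  A.Monic ∧ ∀ P : Polynomial Fq, IsMonicPrime P → P ∣ A → P.natDegree ≤ X

/-- The Dirichlet `L`-function of a non-trivial character `χ` of modulus `R`:
`L(s,χ) = ∑_{A monic, deg A < deg R} χ(A) |A|^{-s}`. -/
def Lfun (R : Polynomial Fq) (χ : Polynomial Fq → ℂ) (s : ℂ) : ℂ :=
  ∑ᶠ A ∈ {A : Polynomial Fq | A.Monic ∧ A.natDegree < R.natDegree},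
    χ A * (absP A : ℂ) ^ (-s)

open Classical in
/-- The von Mangoldt function: `Λ(A) = log |P|` if `A = P^j` (`P` monic prime, `j ≥ 1`),
and `0` otherwise. -/
def LambdaP (A : Polynomial Fq) : ℝ :=
  if h : ∃ P : Polynomial Fq, (P.Monic ∧ Irreducible P) ∧ ∃ j : ℕ, 1 ≤ j ∧ A = P ^ j
  then Real.log (absP h.choose) else 0

/-- The partial Euler product `P_X(s,χ)`. -/
def PX (X : ℕ) (χ : Polynomial Fq → ℂ) (s : ℂ) : ℂ :=
  Complex.exp (∑ᶠ A ∈ {A : Polynomial Fq | A.Monic ∧ A.natDegree ≤ X},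
    χ A * (LambdaP A : ℂ) / ((absP A : ℂ) ^ s * (Real.log (absP A) : ℂ)))

/-- The `L`-function of `χ` as a polynomial in the variable `w = q^{-s}`. -/
def LPoly (R : Polynomial Fq) (χ : Polynomial Fq → ℂ) : Polynomial ℂ :=
  ∑ n ∈ Finset.range R.natDegree,
    Polynomial.C (∑ᶠ A ∈ {A : Polynomial Fq | A.Monic ∧ A.natDegree = n}, χ A) *
      Polynomial.X ^ n

/-- The sum of `f` over the zeros of `L(s,χ)` counted with multiplicity, including
all the vertical `2π/log q`-periodic repetitions: the zeros are exactly the points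
`-log w / log q + 2πim/log q` for `w` a root (with multiplicity) of the `L`-polynomial
and `m ∈ ℤ`. -/
def zeroSum (R : Polynomial Fq) (χ : Polynomial Fq → ℂ) (f : ℂ → ℂ) : ℂ :=
  ((LPoly R χ).roots.map (fun w => ∑' m : ℤ,
    f (-Complex.log w / (Real.log (Fintype.card Fq) : ℂ) +
        2 * Real.pi * Complex.I * (m : ℂ) / (Real.log (Fintype.card Fq) : ℂ)))).sum

/-- The exponential integral `E₁(y) = ∫_{w=y}^{y+∞} e^{-w}/w dw`, along the horizontal
ray from `y` in the direction of `+1`. -/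
def E1 (y : ℂ) : ℂ :=
  ∫ t : ℝ in Set.Ioi (0 : ℝ), Complex.exp (-(y + (t : ℂ))) / (y + (t : ℂ))

/-- `U(z) = ∫_0^∞ u(x) E₁(z log x) dx`. -/
def Ufun (u : ℝ → ℝ) (z : ℂ) : ℂ :=
  ∫ x : ℝ in Set.Ioi (0 : ℝ), (u x : ℂ) * E1 (z * (Real.log x : ℂ))

/-- The Mellin transform `ũ(s) = ∫_0^∞ x^{s-1} u(x) dx`. -/
def mellinT (u : ℝ → ℝ) (s : ℂ) : ℂ :=
  ∫ x : ℝ in Set.Ioi (0 : ℝ), (x : ℂ) ^ (s - 1) * (u x : ℂ)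

/-- The arithmetic-factor constant `a(k)`. -/
def aConst (Fq : Type) [Field Fq] [Fintype Fq] (k : ℕ) : ℝ :=
  ∏' P : {P : Polynomial Fq // IsMonicPrime P},
    (1 - (absP P.1)⁻¹) ^ (k ^ 2) * ∑' m : ℕ, (dk k (P.1 ^ m) : ℝ) ^ 2 / absP (P.1 ^ m)

/-- The modified partial Euler product `P_X^*(s,χ)`. -/
def PXstar (X : ℕ) (χ : Polynomial Fq → ℂ) (s : ℂ) : ℂ :=
  (∏ᶠ P ∈ {P : Polynomial Fq | IsMonicPrime P ∧ P.natDegree ≤ X},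
      (1 - χ P / (absP P : ℂ) ^ s)⁻¹) *
    ∏ᶠ P ∈ {P : Polynomial Fq | IsMonicPrime P ∧ X < 2 * P.natDegree ∧ P.natDegree ≤ X},
      (1 + χ P ^ 2 / (2 * (absP P : ℂ) ^ (2 * s)))⁻¹

open Classical in
/-- The multiplicity of `P` in `A` (for `A ≠ 0`). -/
def multP (P A : Polynomial Fq) : ℕ :=
  if A = 0 then 0 else Nat.findGreatest (fun e => P ^ e ∣ A) A.natDegree

/-- Local coefficients of the Dirichlet series of `P_X^*(s,χ)^k`. -/
def locAlpha (k X : ℕ) (P : Polynomial Fq) (m : ℕ) : ℝ :=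
  if m = 0 then 1
  else if X < P.natDegree then 0
  else if 2 * P.natDegree ≤ X then (dk k (P ^ m) : ℝ)
  else ∑ j ∈ Finset.range (m / 2 + 1),
    (dk k (P ^ (m - 2 * j)) : ℝ) * (dk k (P ^ j) : ℝ) * (-(2 : ℝ)⁻¹) ^ j

/-- `α_k(A)`: the coefficients of the Dirichlet series `P_X^*(s,χ)^k = ∑ α_k(A)χ(A)|A|^{-s}`. -/
def alphaK (k X : ℕ) (A : Polynomial Fq) : ℝ :=
  ∏ᶠ P ∈ {P : Polynomial Fq | IsMonicPrime P ∧ P ∣ A}, locAlpha k X P (multP P A)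

/-- Local coefficients of the Dirichlet series of `P_X^*(s,χ)^{-1}`. -/
def locAlphaNeg (X : ℕ) (P : Polynomial Fq) (m : ℕ) : ℝ :=
  if m = 0 then 1
  else if X < P.natDegree then 0
  else if m = 1 then -1
  else if m = 2 then (if 2 * P.natDegree ≤ X then 0 else 2⁻¹)
  else if m = 3 then (if 2 * P.natDegree ≤ X then 0 else -2⁻¹)
  else 0

/-- The multiplicative function `α_{-1}`. -/
def alphaNeg (X : ℕ) (A : Polynomial Fq) : ℝ :=
  ∏ᶠ P ∈ {P : Polynomial Fq | IsMonicPrime P ∧ P ∣ A}, locAlphaNeg X P (multP P A)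

/-- The cosine integral `Ci(y) = -∫_y^∞ cos t / t dt`. -/
def Ci (y : ℝ) : ℝ := -∫ t : ℝ in Set.Ioi y, Real.cos t / t

open Classical in
/-- The greatest common monic divisor of two polynomials. -/
def gcdP (A B : Polynomial Fq) : Polynomial Fq :=
  Polynomial.C ((EuclideanDomain.gcd A B).leadingCoeff)⁻¹ * EuclideanDomain.gcd A B

/-- The decomposition shape of Lemma `A₁A₂A₃ = B₁B₂B₃`: all factors monic, the
coprimality conditions `gcd(V_{i,j}, V_{k,l}) = 1` for `i ≠ k` and `j ≠ l`, and the six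
product equations. -/
def Decomp3 (A1 A2 A3 B1 B2 B3 G1 G2 G3 V12 V13 V21 V23 V31 V32 : Polynomial Fq) : Prop :=
  G1.Monic ∧ G2.Monic ∧ G3.Monic ∧ V12.Monic ∧ V13.Monic ∧ V21.Monic ∧
    V23.Monic ∧ V31.Monic ∧ V32.Monic ∧
  IsCoprime V12 V21 ∧ IsCoprime V12 V23 ∧ IsCoprime V12 V31 ∧
  IsCoprime V13 V21 ∧ IsCoprime V13 V31 ∧ IsCoprime V13 V32 ∧
  IsCoprime V21 V32 ∧ IsCoprime V23 V31 ∧ IsCoprime V23 V32 ∧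
  A1 = G1 * V12 * V13 ∧ B1 = G1 * V21 * V31 ∧
  A2 = G2 * V21 * V23 ∧ B2 = G2 * V12 * V32 ∧
  A3 = G3 * V31 * V32 ∧ B3 = G3 * V13 * V23

/-!
With `X = q⁻ˢ`, the Dirichlet series of `2 ^ (ω(N) - ω(gcd(N, M)))` over the `N` prime to `R` is
`ζ(s)² / ζ(2s)` with its Euler factors at the primes dividing `M R` altered. After `X` is rescaled
by `q⁻¹` it becomes `A(X) / (1 - X)²`, where `A` converges in a disc of radius greater than `1`, and
the weights `(z - deg N)ᵏ` are combinations of the coefficients of the series `(1 - X)⁻ʲ⁻¹`.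
Dividing repeatedly by `1 - X` expands `A` in powers of `1 - X`; weighted `ℓ¹` norms of power series
bound the remainder and take the place of contour integrals. The coefficients of the expansion are
bounded by the maximum of `|A|` on a circle about `1`: the sum of the degrees of the primes dividing
`M R` is at most `2 deg R`, so on a circle of radius comparable to `1 / log (deg R)` this maximum is
`O(A(1))`, and each further coefficient costs only a factor `log (deg R)`.
-/

section WeightedSums

open Finset.HasAntidiagonal (antidiagonal mem_antidiagonal)

variable {𝕜 : Type*} [NormedField 𝕜]

/-- The truncation to the first `n` terms of the weighted `ℓ¹` norm `∑ ‖aᵢ‖ rⁱ` of a power series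
`∑ aᵢ Xⁱ`. Working with all truncations at once avoids any summability side condition. -/
def l1Sum (r : ℝ) (n : ℕ) (A : PowerSeries 𝕜) : ℝ :=
  ∑ i ∈ Finset.range n, ‖PowerSeries.coeff i A‖ * r ^ i

variable {r : ℝ} {n : ℕ}

lemma l1Sum_nonneg (hr : 0 ≤ r) (A : PowerSeries 𝕜) : 0 ≤ l1Sum r n A :=
  Finset.sum_nonneg fun _ _ ↦ by positivity

lemma l1Sum_add_le (hr : 0 ≤ r) (A B : PowerSeries 𝕜) :
    l1Sum r n (A + B) ≤ l1Sum r n A + l1Sum r n B := by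
  rw [l1Sum, l1Sum, l1Sum, ← Finset.sum_add_distrib]
  refine Finset.sum_le_sum fun i _ ↦ ?_
  rw [← add_mul, map_add]
  gcongr
  exact norm_add_le _ _

lemma l1Sum_monomial_le (hr : 0 ≤ r) (d : ℕ) (a : 𝕜) :
    l1Sum r n (PowerSeries.monomial d a) ≤ ‖a‖ * r ^ d := by
  have h : ∀ i, ‖PowerSeries.coeff i (PowerSeries.monomial d a)‖ * r ^ i =
      if i = d then ‖a‖ * r ^ d else 0 := fun i ↦ by
    rw [PowerSeries.coeff_monomial]
    split_ifs with hi <;> simp [hi]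
  rw [l1Sum, Finset.sum_congr rfl fun i _ ↦ h i, Finset.sum_ite_eq']
  split_ifs
  exacts [le_rfl, by positivity]

lemma l1Sum_one_le (hr : 0 ≤ r) : l1Sum r n (1 : PowerSeries 𝕜) ≤ 1 := by
  simpa using l1Sum_monomial_le (𝕜 := 𝕜) (n := n) hr 0 1

lemma l1Sum_one_add_monomial_le (hr : 0 ≤ r) (d : ℕ) (a : 𝕜) :
    l1Sum r n (1 + PowerSeries.monomial d a) ≤ 1 + ‖a‖ * r ^ d :=
  (l1Sum_add_le hr _ _).trans (add_le_add (l1Sum_one_le hr) (l1Sum_monomial_le hr d a))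

lemma sum_range_sum_antidiagonal_mul_le {f g : ℕ → ℝ} (hf : ∀ i, 0 ≤ f i) (hg : ∀ i, 0 ≤ g i)
    (n : ℕ) :
    ∑ i ∈ Finset.range n, ∑ p ∈ antidiagonal i, f p.1 * g p.2 ≤
      (∑ i ∈ Finset.range n, f i) * ∑ i ∈ Finset.range n, g i := by
  rw [Finset.sum_mul_sum, ← Finset.sum_product', ← Finset.sum_biUnion]
  · refine Finset.sum_le_sum_of_subset_of_nonneg (fun p hp ↦ ?_)
      fun p _ _ ↦ mul_nonneg (hf _) (hg _)
    simp only [Finset.mem_biUnion, Finset.mem_range, mem_antidiagonal,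
      Finset.mem_product] at hp ⊢
    omega
  · intro i _ j _ hij
    refine Finset.disjoint_left.2 fun p hi hj ↦ hij ?_
    rw [mem_antidiagonal] at hi hj
    rw [← hi, hj]

lemma l1Sum_mul_le (hr : 0 ≤ r) (A B : PowerSeries 𝕜) :
    l1Sum r n (A * B) ≤ l1Sum r n A * l1Sum r n B := by
  refine le_trans (Finset.sum_le_sum fun i _ ↦ ?_) (sum_range_sum_antidiagonal_mul_le
    (fun i ↦ mul_nonneg (norm_nonneg (PowerSeries.coeff i A)) (pow_nonneg hr i))
    (fun i ↦ mul_nonneg (norm_nonneg (PowerSeries.coeff i B)) (pow_nonneg hr i)) n)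
  rw [PowerSeries.coeff_mul]
  calc ‖∑ p ∈ antidiagonal i, PowerSeries.coeff p.1 A * PowerSeries.coeff p.2 B‖ * r ^ i
      ≤ (∑ p ∈ antidiagonal i, ‖PowerSeries.coeff p.1 A‖ * ‖PowerSeries.coeff p.2 B‖) *
          r ^ i := by
        gcongr
        exact (norm_sum_le _ _).trans (Finset.sum_le_sum fun p _ ↦ norm_mul_le _ _)
    _ = ∑ p ∈ antidiagonal i, ‖PowerSeries.coeff p.1 A‖ * r ^ p.1 *
          (‖PowerSeries.coeff p.2 B‖ * r ^ p.2) := by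
        rw [Finset.sum_mul]
        refine Finset.sum_congr rfl fun p hp ↦ ?_
        rw [← mem_antidiagonal.1 hp, pow_add]
        ring

lemma l1Sum_prod_le {ι : Type*} (hr : 0 ≤ r) (S : Finset ι) (A : ι → PowerSeries 𝕜) :
    l1Sum r n (∏ i ∈ S, A i) ≤ ∏ i ∈ S, l1Sum r n (A i) := by
  induction S using Finset.cons_induction with
  | empty => simpa using l1Sum_one_le hr
  | cons i S hi ih =>
    rw [Finset.prod_cons, Finset.prod_cons]
    exact (l1Sum_mul_le hr _ _).trans (mul_le_mul_of_nonneg_left ih (l1Sum_nonneg hr _))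

-- `A = 1 - E A`, so the truncated norm `s` of `A` satisfies `s ≤ 1 + u s`.
lemma l1Sum_le_of_one_add_mul_eq_one {A E : PowerSeries 𝕜} {u : ℝ} (hr : 0 ≤ r) (hu : u < 1)
    (hE : l1Sum r n E ≤ u) (h : (1 + E) * A = 1) : l1Sum r n A ≤ (1 - u)⁻¹ := by
  have hA : A = 1 + (-1 : PowerSeries 𝕜) * (E * A) := by linear_combination h
  have hneg : l1Sum r n ((-1 : PowerSeries 𝕜) * (E * A)) = l1Sum r n (E * A) := by simp [l1Sum]
  have hself : l1Sum r n A ≤ 1 + u * l1Sum r n A := by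
    calc l1Sum r n A ≤ 1 + l1Sum r n (E * A) := by
          conv_lhs => rw [hA]
          rw [← hneg]
          exact (l1Sum_add_le hr _ _).trans (by gcongr; exact l1Sum_one_le hr)
      _ ≤ 1 + u * l1Sum r n A := by
          gcongr
          exact (l1Sum_mul_le hr _ _).trans (mul_le_mul_of_nonneg_right hE (l1Sum_nonneg hr _))
  rw [← one_div, le_div_iff₀ (by linarith)]
  linarith

/-- `A` converges absolutely on the closed disc of radius `r`. -/
def AbsSummable (r : ℝ) (A : PowerSeries 𝕜) : Prop :=
  Summable fun i ↦ ‖PowerSeries.coeff i A‖ * r ^ i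

lemma AbsSummable.of_l1Sum_le {A : PowerSeries 𝕜} {N : ℝ} (hr : 0 ≤ r)
    (hA : ∀ n, l1Sum r n A ≤ N) : AbsSummable r A :=
  summable_of_sum_range_le (fun _ ↦ by positivity) hA

lemma tsum_norm_coeff_mul_pow_le {A : PowerSeries 𝕜} {N : ℝ} (hr : 0 ≤ r)
    (hA : ∀ n, l1Sum r n A ≤ N) : ∑' i, ‖PowerSeries.coeff i A‖ * r ^ i ≤ N :=
  Real.tsum_le_of_sum_range_le (fun _ ↦ by positivity) hA

end WeightedSums

section Evaluation

open Finset.HasAntidiagonal (mem_antidiagonal)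

variable {𝕜 : Type*} [NormedField 𝕜]

/-- The value of a power series at a point of its disc of convergence. Since it is defined
by `tsum`, it is `0` where the series does not converge. -/
def seriesValue (A : PowerSeries 𝕜) (v : 𝕜) : 𝕜 :=
  ∑' i, PowerSeries.coeff i A * v ^ i

variable {r : ℝ} {A B : PowerSeries 𝕜} {v : 𝕜}

lemma AbsSummable.norm_mul_pow (hA : AbsSummable r A) (hv : ‖v‖ ≤ r) :
    Summable fun i ↦ ‖PowerSeries.coeff i A * v ^ i‖ :=
  Summable.of_nonneg_of_le (fun _ ↦ norm_nonneg _)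
    (fun i ↦ by rw [norm_mul, norm_pow]; gcongr) hA

lemma AbsSummable.mul_pow [CompleteSpace 𝕜] (hA : AbsSummable r A) (hv : ‖v‖ ≤ r) :
    Summable fun i ↦ PowerSeries.coeff i A * v ^ i :=
  (hA.norm_mul_pow hv).of_norm

lemma AbsSummable.mul (hr : 0 ≤ r) (hA : AbsSummable r A) (hB : AbsSummable r B) :
    AbsSummable r (A * B) := by
  refine AbsSummable.of_l1Sum_le (N := (∑' i, ‖PowerSeries.coeff i A‖ * r ^ i) *
    ∑' i, ‖PowerSeries.coeff i B‖ * r ^ i) hr fun n ↦ (l1Sum_mul_le hr A B).trans ?_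
  exact mul_le_mul (hA.sum_le_tsum _ fun _ _ ↦ by positivity)
    (hB.sum_le_tsum _ fun _ _ ↦ by positivity) (l1Sum_nonneg hr _)
    (tsum_nonneg fun _ ↦ by positivity)

lemma AbsSummable.one_add_monomial (hr : 0 ≤ r) (d : ℕ) (a : 𝕜) :
    AbsSummable r (1 + PowerSeries.monomial d a) :=
  AbsSummable.of_l1Sum_le hr fun _ ↦ l1Sum_one_add_monomial_le hr d a

lemma AbsSummable.prod {ι : Type*} (hr : 0 ≤ r) {S : Finset ι} {A : ι → PowerSeries 𝕜}
    (hA : ∀ i ∈ S, AbsSummable r (A i)) : AbsSummable r (∏ i ∈ S, A i) :=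
  Finset.prod_induction A (AbsSummable r) (fun _ _ ↦ AbsSummable.mul hr)
    (by simpa using AbsSummable.one_add_monomial (𝕜 := 𝕜) hr 0 0) hA

lemma seriesValue_one_add_monomial (d : ℕ) (a v : 𝕜) :
    seriesValue (1 + PowerSeries.monomial d a) v = 1 + a * v ^ d := by
  have h : ∀ (e : ℕ) (b : 𝕜),
      HasSum (fun i ↦ PowerSeries.coeff i (PowerSeries.monomial e b) * v ^ i) (b * v ^ e) := by
    intro e b
    convert hasSum_single (f := fun i ↦ PowerSeries.coeff i (PowerSeries.monomial e b) * v ^ i) e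
      fun i hi ↦ by simp [PowerSeries.coeff_monomial, hi] using 1
    simp
  simpa [seriesValue, add_mul] using ((h 0 1).add (h d a)).tsum_eq

lemma seriesValue_mul [CompleteSpace 𝕜] (hA : AbsSummable r A) (hB : AbsSummable r B)
    (hv : ‖v‖ ≤ r) :
    seriesValue (A * B) v = seriesValue A v * seriesValue B v := by
  rw [seriesValue, seriesValue, seriesValue,
    tsum_mul_tsum_eq_tsum_sum_antidiagonal_of_summable_norm (hA.norm_mul_pow hv)
      (hB.norm_mul_pow hv)]
  refine tsum_congr fun n ↦ ?_
  rw [PowerSeries.coeff_mul, Finset.sum_mul]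
  refine Finset.sum_congr rfl fun p hp ↦ ?_
  rw [← mem_antidiagonal.1 hp, pow_add]
  ring

lemma seriesValue_prod [CompleteSpace 𝕜] {ι : Type*} (hr : 0 ≤ r) {S : Finset ι}
    {A : ι → PowerSeries 𝕜} (hA : ∀ i ∈ S, AbsSummable r (A i)) (hv : ‖v‖ ≤ r) :
    seriesValue (∏ i ∈ S, A i) v = ∏ i ∈ S, seriesValue (A i) v := by
  induction S using Finset.cons_induction with
  | empty => simpa using seriesValue_one_add_monomial 0 0 v
  | cons i S hi ih =>
    have hS : ∀ j ∈ S, AbsSummable r (A j) := fun j hj ↦ hA j (Finset.mem_cons_of_mem hj)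
    rw [Finset.prod_cons, Finset.prod_cons,
      seriesValue_mul (hA i (Finset.mem_cons_self i S)) (.prod hr hS) hv, ih hS]

lemma differentiableOn_seriesValue {A : PowerSeries ℂ} (hA : AbsSummable r A) :
    DifferentiableOn ℂ (seriesValue A) (Metric.ball 0 r) :=
  Complex.differentiableOn_tsum_of_summable_norm hA (fun i ↦ by fun_prop) Metric.isOpen_ball
    fun i w hw ↦ by
      rw [norm_mul, norm_pow]
      have := (mem_ball_zero_iff.1 hw).le
      gcongr

end Evaluation

section DivisionByOneSub

variable {𝕜 : Type*} [NormedField 𝕜]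

/-- The quotient `(A - A(1)) / (1 - X)`, see `eq_seriesValue_one_add_mul_divOneSub`. -/
def divOneSub (A : PowerSeries 𝕜) : PowerSeries 𝕜 :=
  PowerSeries.mk fun n ↦ -∑' m, PowerSeries.coeff (m + (n + 1)) A

variable {r N : ℝ} {A : PowerSeries 𝕜}

lemma AbsSummable.summable_norm_coeff (hr : 1 ≤ r) (hA : AbsSummable r A) :
    Summable fun i ↦ ‖PowerSeries.coeff i A‖ := by
  simpa using hA.norm_mul_pow (v := 1) (by simpa using hr)

lemma eq_seriesValue_one_add_mul_divOneSub [CompleteSpace 𝕜] (hr : 1 ≤ r) (hA : AbsSummable r A) :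
    A = PowerSeries.C (seriesValue A 1) + (1 - PowerSeries.X) * divOneSub A := by
  have hs : ∀ n, Summable fun m ↦ PowerSeries.coeff (m + n) A := fun n ↦
    (summable_nat_add_iff n).2 (hA.summable_norm_coeff hr).of_norm
  ext (_ | n)
  · have h := (hs 0).tsum_eq_zero_add
    simp only [add_zero] at h
    simp only [sub_mul, one_mul, map_add, map_sub, PowerSeries.coeff_zero_C,
      PowerSeries.coeff_zero_X_mul, divOneSub, PowerSeries.coeff_mk, seriesValue, one_pow, mul_one,
      sub_zero, zero_add, h]
    ring
  · have h := (hs (n + 1)).tsum_eq_zero_add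
    simp only [zero_add, add_assoc, add_comm 1] at h
    simp only [sub_mul, one_mul, map_add, map_sub, PowerSeries.coeff_succ_C,
      PowerSeries.coeff_succ_X_mul, divOneSub, PowerSeries.coeff_mk, zero_add, h, add_assoc]
    ring

-- Abel summation: with `T n = ∑_{m ≥ n} ‖aₘ‖`, the difference of two consecutive values of
-- `∑_{i < n} ‖aᵢ‖ rⁱ + rⁿ T n ≤ N` is `(r - 1) rⁿ T (n + 1)`.
lemma l1Sum_divOneSub_le (hr : 1 < r) (hA : ∀ n, l1Sum r n A ≤ N) (n : ℕ) :
    l1Sum r n (divOneSub A) ≤ N / (r - 1) := by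
  have hr0 : 0 ≤ r := by linarith
  have hsum : AbsSummable r A := .of_l1Sum_le hr0 hA
  have hs : ∀ n, Summable fun m ↦ ‖PowerSeries.coeff (m + n) A‖ := fun n ↦
    (summable_nat_add_iff n).2 (hsum.summable_norm_coeff hr.le)
  set T : ℕ → ℝ := fun n ↦ ∑' m, ‖PowerSeries.coeff (m + n) A‖
  have hT : ∀ n, T n = ‖PowerSeries.coeff n A‖ + T (n + 1) := fun n ↦ by
    simpa [add_assoc, add_comm 1] using (hs n).tsum_eq_zero_add
  have htotal : l1Sum r n A + r ^ n * T n ≤ N := by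
    calc l1Sum r n A + r ^ n * T n
        ≤ l1Sum r n A + ∑' m, ‖PowerSeries.coeff (m + n) A‖ * r ^ (m + n) := by
          rw [← tsum_mul_left]
          refine add_le_add_right (((hs n).mul_left _).tsum_le_tsum (fun m ↦ ?_)
            ((summable_nat_add_iff n).2 hsum)) _
          rw [mul_comm]
          gcongr
          exacts [hr.le, by omega]
      _ = ∑' i, ‖PowerSeries.coeff i A‖ * r ^ i := hsum.sum_add_tsum_nat_add n
      _ ≤ N := tsum_norm_coeff_mul_pow_le hr0 hA
  have habel : ∀ n, (r - 1) * ∑ i ∈ Finset.range n, T (i + 1) * r ^ i ≤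
      l1Sum r n A + r ^ n * T n := by
    intro n
    induction n with
    | zero => simpa [l1Sum] using tsum_nonneg fun _ ↦ norm_nonneg _
    | succ n ih =>
      rw [hT n] at ih
      rw [l1Sum] at ih ⊢
      rw [Finset.sum_range_succ, Finset.sum_range_succ, pow_succ]
      linarith
  rw [le_div_iff₀ (by linarith), mul_comm]
  refine le_trans ?_ ((habel n).trans htotal)
  have : 0 ≤ r - 1 := by linarith
  refine mul_le_mul_of_nonneg_left (Finset.sum_le_sum fun i _ ↦ ?_) this
  rw [divOneSub, PowerSeries.coeff_mk, norm_neg]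
  gcongr
  exact norm_tsum_le_tsum_norm (hs (i + 1))

lemma l1Sum_iterate_divOneSub_le (hr : 1 < r) (hA : ∀ n, l1Sum r n A ≤ N) (i n : ℕ) :
    l1Sum r n (divOneSub^[i] A) ≤ N / (r - 1) ^ i := by
  induction i generalizing n with
  | zero => simpa using hA n
  | succ i ih =>
    rw [Function.iterate_succ_apply', pow_succ, ← div_div]
    exact l1Sum_divOneSub_le hr ih n

lemma eq_sum_seriesValue_iterate_divOneSub [CompleteSpace 𝕜] (hr : 1 < r)
    (hA : ∀ n, l1Sum r n A ≤ N) (J : ℕ) :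
    A = ∑ i ∈ Finset.range J,
        PowerSeries.C (seriesValue (divOneSub^[i] A) 1) * (1 - PowerSeries.X) ^ i +
      (1 - PowerSeries.X) ^ J * divOneSub^[J] A := by
  induction J with
  | zero => simp
  | succ J ih =>
    have h := eq_seriesValue_one_add_mul_divOneSub hr.le
      (.of_l1Sum_le (by linarith) (l1Sum_iterate_divOneSub_le hr hA J))
    rw [Finset.sum_range_succ, Function.iterate_succ_apply']
    linear_combination ih + (1 - PowerSeries.X) ^ J * h

lemma seriesValue_eq_add_mul_divOneSub [CompleteSpace 𝕜] (hr : 1 < r)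
    (hA : ∀ n, l1Sum r n A ≤ N) {v : 𝕜} (hv : ‖v‖ ≤ r) :
    seriesValue A v = seriesValue A 1 + (1 - v) * seriesValue (divOneSub A) v := by
  have hr0 : 0 ≤ r := by linarith
  have hD : AbsSummable r (divOneSub A) :=
    .of_l1Sum_le hr0 (l1Sum_divOneSub_le hr hA)
  have hX : (1 - PowerSeries.X : PowerSeries 𝕜) = 1 + PowerSeries.monomial 1 (-1) := by
    rw [map_neg, ← PowerSeries.X_eq, sub_eq_add_neg]
  have hC : PowerSeries.C (seriesValue A 1) = 1 + PowerSeries.monomial 0 (seriesValue A 1 - 1) := by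
    simp
  have h1 : AbsSummable r (PowerSeries.C (seriesValue A 1)) := hC ▸ .one_add_monomial hr0 _ _
  have h2 : AbsSummable r ((1 - PowerSeries.X) * divOneSub A) :=
    .mul hr0 (hX ▸ .one_add_monomial hr0 _ _) hD
  have hadd : seriesValue (PowerSeries.C (seriesValue A 1) + (1 - PowerSeries.X) * divOneSub A) v =
      seriesValue (PowerSeries.C (seriesValue A 1)) v +
        seriesValue ((1 - PowerSeries.X) * divOneSub A) v := by
    simp only [seriesValue, map_add, add_mul]
    exact (h1.mul_pow hv).tsum_add (h2.mul_pow hv)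
  conv_lhs => rw [eq_seriesValue_one_add_mul_divOneSub hr.le (.of_l1Sum_le hr0 hA)]
  rw [hadd, hC, hX, seriesValue_mul (.one_add_monomial hr0 _ _) hD hv,
    seriesValue_one_add_monomial, seriesValue_one_add_monomial]
  ring

lemma norm_seriesValue_one_le_of_sphere {A : PowerSeries ℂ} {ρ M : ℝ} (hρ : 0 < ρ)
    (hρr : 1 + ρ < r) (hA : AbsSummable r A)
    (hM : ∀ v ∈ Metric.sphere (1 : ℂ) ρ, ‖seriesValue A v‖ ≤ M) :
    ‖seriesValue A 1‖ ≤ M := by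
  have hsub : Metric.closedBall (1 : ℂ) ρ ⊆ Metric.ball 0 r := fun v hv ↦ by
    rw [mem_ball_zero_iff]
    have h := norm_add_le (v - 1) 1
    rw [sub_add_cancel, norm_one] at h
    linarith [mem_closedBall_iff_norm.1 hv]
  refine Complex.norm_le_of_forall_mem_frontier_norm_le Metric.isBounded_ball
    (((differentiableOn_seriesValue hA).mono hsub).diffContOnCl_ball le_rfl)
    (fun v hv ↦ hM v (Metric.frontier_ball_subset_sphere hv))
    (subset_closure (Metric.mem_ball_self hρ))

lemma norm_seriesValue_iterate_divOneSub_le {A : PowerSeries ℂ} {ρ M : ℝ} (hρ : 0 < ρ)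
    (hρr : 1 + ρ < r) (hA : ∀ n, l1Sum r n A ≤ N)
    (hM : ∀ v ∈ Metric.sphere (1 : ℂ) ρ, ‖seriesValue A v‖ ≤ M) (i : ℕ) :
    ∀ v ∈ Metric.sphere (1 : ℂ) ρ, ‖seriesValue (divOneSub^[i] A) v‖ ≤ M * (2 / ρ) ^ i := by
  have hr : 1 < r := by linarith
  induction i with
  | zero => simpa using hM
  | succ i ih =>
    intro v hv
    have hi := l1Sum_iterate_divOneSub_le hr hA i
    have hv1 : ‖1 - v‖ = ρ := by rw [norm_sub_rev]; exact mem_sphere_iff_norm.1 hv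
    have hvr : ‖v‖ ≤ r := by
      have h := norm_sub_le 1 (1 - v)
      rw [sub_sub_cancel, norm_one, hv1] at h
      linarith
    have h1 := norm_seriesValue_one_le_of_sphere hρ hρr
      (.of_l1Sum_le (by linarith) hi) ih
    have hmul : ρ * ‖seriesValue (divOneSub^[i + 1] A) v‖ ≤ 2 * (M * (2 / ρ) ^ i) := by
      have heq := seriesValue_eq_add_mul_divOneSub hr hi hvr
      rw [← Function.iterate_succ_apply' divOneSub] at heq
      nth_rw 1 [← hv1]
      rw [← norm_mul, ← sub_eq_iff_eq_add'.2 heq]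
      linarith [norm_sub_le (seriesValue (divOneSub^[i] A) v) (seriesValue (divOneSub^[i] A) 1),
        ih v hv]
    calc ‖seriesValue (divOneSub^[i + 1] A) v‖ ≤ 2 * (M * (2 / ρ) ^ i) / ρ := by
          rw [le_div_iff₀ hρ]; linarith
      _ = M * (2 / ρ) ^ (i + 1) := by ring

end DivisionByOneSub

section PoleAtOne

lemma choose_add_le_mul_pow (i z : ℕ) (hz : 1 ≤ z) :
    ((i + z).choose i : ℝ) ≤ (i + 1) ^ i * (z : ℝ) ^ i := by
  have hz' : (1 : ℝ) ≤ z := by exact_mod_cast hz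
  calc ((i + z).choose i : ℝ) ≤ ((i + z : ℕ) : ℝ) ^ i / (i.factorial : ℝ) :=
        Nat.choose_le_pow_div i (i + z)
    _ ≤ ((i + z : ℕ) : ℝ) ^ i :=
        div_le_self (by positivity) (by exact_mod_cast i.factorial_pos)
    _ ≤ ((i + 1) * z) ^ i := by
        gcongr
        push_cast
        nlinarith [(Nat.cast_nonneg i : (0 : ℝ) ≤ i)]
    _ = (i + 1) ^ i * (z : ℝ) ^ i := mul_pow _ _ _

lemma abs_choose_add_sub_le (J z : ℕ) (hz : 1 ≤ z) :
    |((J + z).choose J : ℝ) - (z : ℝ) ^ J / J.factorial| ≤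
      (J + 1) ^ (J + 1) * (z : ℝ) ^ (J - 1) := by
  have hz' : (1 : ℝ) ≤ z := by exact_mod_cast hz
  have hlower : (z : ℝ) ^ J / J.factorial ≤ (J + z).choose J := by
    refine le_trans ?_ (Nat.pow_le_choose J (J + z))
    gcongr
    omega
  have hupper : ((J + z).choose J : ℝ) ≤ (J + z : ℝ) ^ J / J.factorial := by
    simpa using Nat.choose_le_pow_div (α := ℝ) J (J + z)
  have hpow : (J + z : ℝ) ^ J - (z : ℝ) ^ J ≤ J * J * (J + z : ℝ) ^ (J - 1) := by
    have h := abs_pow_sub_pow_le (J + z : ℝ) z J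
    rw [add_sub_cancel_right, Nat.abs_cast, Nat.abs_cast,
      abs_of_nonneg (by positivity : (0 : ℝ) ≤ J + z), max_eq_left (by simp)] at h
    exact (le_abs_self _).trans h
  rw [abs_of_nonneg (sub_nonneg.2 hlower)]
  calc ((J + z).choose J : ℝ) - (z : ℝ) ^ J / J.factorial
      ≤ ((J + z : ℝ) ^ J - (z : ℝ) ^ J) / J.factorial := by rw [sub_div]; gcongr
    _ ≤ (J + z : ℝ) ^ J - (z : ℝ) ^ J :=
        div_le_self (sub_nonneg.2 (by gcongr; simp)) (by exact_mod_cast J.factorial_pos)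
    _ ≤ J * J * (J + z : ℝ) ^ (J - 1) := hpow
    _ ≤ J * J * ((J + 1) * z) ^ (J - 1) := by
        gcongr
        nlinarith [(Nat.cast_nonneg J : (0 : ℝ) ≤ J)]
    _ = J * J * (J + 1) ^ (J - 1) * (z : ℝ) ^ (J - 1) := by rw [mul_pow]; ring
    _ ≤ (J + 1) ^ (J + 1) * (z : ℝ) ^ (J - 1) := by
        gcongr
        rcases J with _ | J
        · simp
        · rw [Nat.add_sub_cancel, show J + 1 + 1 = J + 2 from rfl, pow_add _ J 2, mul_comm]
          gcongr
          push_cast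
          nlinarith [(Nat.cast_nonneg J : (0 : ℝ) ≤ J)]

variable {𝕜 : Type*} [NormedField 𝕜]

lemma sum_coeff_mul_choose_eq_coeff (B : PowerSeries 𝕜) (z j : ℕ) :
    ∑ n ∈ Finset.range (z + 1), PowerSeries.coeff n B * ((j + (z - n)).choose j : 𝕜) =
      PowerSeries.coeff z (PowerSeries.mk 1 ^ (j + 1) * B) := by
  rw [PowerSeries.mk_one_pow_eq_mk_choose_add, mul_comm, PowerSeries.coeff_mul,
    Finset.Nat.sum_antidiagonal_eq_sum_range_succ
      (fun n m ↦ PowerSeries.coeff n B * PowerSeries.coeff m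
        (PowerSeries.mk fun n ↦ ((j + n).choose j : 𝕜)))]
  simp only [PowerSeries.coeff_mk]

lemma sum_coeff_mul_choose_eq [CompleteSpace 𝕜] {r N : ℝ} {A B : PowerSeries 𝕜} {p : ℕ}
    (hr : 1 < r) (hA : ∀ n, l1Sum r n A ≤ N) (hAB : (1 - PowerSeries.X) ^ p * B = A) (z j : ℕ) :
    ∑ n ∈ Finset.range (z + 1), PowerSeries.coeff n B * ((j + (z - n)).choose j : 𝕜) =
      ∑ i ∈ Finset.range (j + p + 1),
        seriesValue (divOneSub^[i] A) 1 * ((j + p - i + z).choose (j + p - i) : 𝕜) +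
      PowerSeries.coeff z (divOneSub^[j + p + 1] A) := by
  have hX : ∀ i, (PowerSeries.mk 1 : PowerSeries 𝕜) ^ i * (1 - PowerSeries.X) ^ i = 1 := fun i ↦ by
    rw [← mul_pow, PowerSeries.mk_one_mul_one_sub_eq_one, one_pow]
  have hB : PowerSeries.mk 1 ^ (j + 1) * B = PowerSeries.mk 1 ^ (j + p + 1) * A := by
    rw [← hAB]
    linear_combination (-(PowerSeries.mk 1 ^ (j + 1) * B)) * hX p
  have hterm : ∀ i ∈ Finset.range (j + p + 1), PowerSeries.mk 1 ^ (j + p + 1) *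
      (PowerSeries.C (seriesValue (divOneSub^[i] A) 1) * (1 - PowerSeries.X) ^ i) =
      PowerSeries.C (seriesValue (divOneSub^[i] A) 1) * PowerSeries.mk 1 ^ (j + p - i + 1) := by
    intro i hi
    rw [Finset.mem_range] at hi
    rw [show j + p + 1 = (j + p - i + 1) + i by omega, pow_add]
    linear_combination (PowerSeries.C (seriesValue (divOneSub^[i] A) 1) *
      PowerSeries.mk 1 ^ (j + p - i + 1)) * hX i
  rw [sum_coeff_mul_choose_eq_coeff, hB]
  conv_lhs => rw [eq_sum_seriesValue_iterate_divOneSub hr hA (j + p + 1)]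
  rw [mul_add, ← mul_assoc, hX, one_mul, Finset.mul_sum, Finset.sum_congr rfl hterm, map_add,
    map_sum]
  congr 1
  refine Finset.sum_congr rfl fun i _ ↦ ?_
  rw [PowerSeries.coeff_C_mul, PowerSeries.mk_one_pow_eq_mk_choose_add, PowerSeries.coeff_mk]

/-- The series `B` has a pole of order at most `p` at `1` with regular part `A = (1 - X)ᵖ B`, which
is bounded by `N` in the `ℓ¹` norm of weight `r` and by `M` on the circle of radius `1 / Y` about
`1`. The circle lies in the disc of radius `r` and `Y` is the scale on which `A` varies. -/
structure PoleAtOne (p : ℕ) (r N Y M : ℝ) (A B : PowerSeries ℂ) : Prop where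
  mul_eq : (1 - PowerSeries.X) ^ p * B = A
  one_le : 1 ≤ Y
  radius_lt : 1 + Y⁻¹ < r
  l1Sum_le : ∀ n, l1Sum r n A ≤ N
  norm_le : ∀ v ∈ Metric.sphere (1 : ℂ) Y⁻¹, ‖seriesValue A v‖ ≤ M

namespace PoleAtOne

variable {p : ℕ} {r N Y M b : ℝ} {A B : PowerSeries ℂ}

lemma one_lt (h : PoleAtOne p r N Y M A B) : 1 < r := by
  have := h.radius_lt
  have := inv_pos.2 (zero_lt_one.trans_le h.one_le)
  linarith

lemma norm_seriesValue_le (h : PoleAtOne p r N Y M A B) (i : ℕ) :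
    ‖seriesValue (divOneSub^[i] A) 1‖ ≤ M * (2 * Y) ^ i := by
  have hY : 0 < Y⁻¹ := inv_pos.2 (zero_lt_one.trans_le h.one_le)
  have := norm_seriesValue_one_le_of_sphere hY h.radius_lt
    (.of_l1Sum_le (by linarith [h.one_lt]) (l1Sum_iterate_divOneSub_le h.one_lt h.l1Sum_le i))
    (norm_seriesValue_iterate_divOneSub_le hY h.radius_lt h.l1Sum_le h.norm_le i)
  rwa [div_inv_eq_mul] at this

lemma nonneg (h : PoleAtOne p r N Y M A B) : 0 ≤ M := by
  simpa using (norm_nonneg _).trans (h.norm_seriesValue_le 0)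

lemma nonneg_of_le_mul (h : PoleAtOne p r N Y M A B) {z : ℕ} (hY : Y ≤ b * z) : 0 ≤ b := by
  by_contra! hb
  nlinarith [h.one_le, (Nat.cast_nonneg z : (0 : ℝ) ≤ z)]

lemma norm_coeff_iterate_le (h : PoleAtOne p r N Y M A B) (i z : ℕ) :
    ‖PowerSeries.coeff z (divOneSub^[i] A)‖ ≤ ((r - 1) ^ i)⁻¹ * (N / r ^ z) := by
  have hr := h.one_lt
  have hz : 0 < r ^ z := by positivity
  rw [← mul_div_assoc, le_div_iff₀ hz, inv_mul_eq_div]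
  refine le_trans ?_ (l1Sum_iterate_divOneSub_le hr h.l1Sum_le i (z + 1))
  exact Finset.single_le_sum (f := fun n ↦ ‖PowerSeries.coeff n (divOneSub^[i] A)‖ * r ^ n)
    (fun _ _ ↦ by positivity) (Finset.self_mem_range_succ z)

-- The powers of `Y` beyond the first are absorbed by `Y ≤ b z`.
lemma norm_seriesValue_mul_choose_le (h : PoleAtOne p r N Y M A B) {z : ℕ} (hz : 1 ≤ z)
    (hY : Y ≤ b * z) {J i : ℕ} (hi : i < J) :
    ‖seriesValue (divOneSub^[i + 1] A) 1 * ((J - (i + 1) + z).choose (J - (i + 1)) : ℂ)‖ ≤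
      2 ^ (i + 1) * b ^ i * (J + 1) ^ J * (M * (z : ℝ) ^ (J - 1) * Y) := by
  have hY1 := h.one_le
  have hM := h.nonneg
  have hchoose : ((J - (i + 1) + z).choose (J - (i + 1)) : ℝ) ≤
      (J + 1) ^ J * (z : ℝ) ^ (J - (i + 1)) := by
    refine (choose_add_le_mul_pow _ z hz).trans ?_
    gcongr ?_ * _
    calc (((J - (i + 1) : ℕ) : ℝ) + 1) ^ (J - (i + 1)) ≤ ((J : ℝ) + 1) ^ (J - (i + 1)) := by
          gcongr
          omega
      _ ≤ ((J : ℝ) + 1) ^ J := pow_le_pow_right₀ (by simp) (by omega)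
  have hJ : (z : ℝ) ^ (J - 1) = (z : ℝ) ^ i * (z : ℝ) ^ (J - (i + 1)) := by
    rw [← pow_add]
    congr 1
    omega
  rw [norm_mul, Complex.norm_natCast]
  calc _ ≤ M * (2 * Y) ^ (i + 1) * ((J + 1) ^ J * (z : ℝ) ^ (J - (i + 1))) := by
        gcongr
        exact h.norm_seriesValue_le (i + 1)
    _ = 2 ^ (i + 1) * (J + 1) ^ J * M * (z : ℝ) ^ (J - (i + 1)) * Y * Y ^ i := by ring
    _ ≤ 2 ^ (i + 1) * (J + 1) ^ J * M * (z : ℝ) ^ (J - (i + 1)) * Y * (b * z) ^ i := by gcongr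
    _ = _ := by rw [hJ, mul_pow]; ring

lemma norm_seriesValue_mul_choose_sub_le (h : PoleAtOne p r N Y M A B) {z : ℕ} (hz : 1 ≤ z)
    (J : ℕ) :
    ‖seriesValue A 1 * ((J + z).choose J : ℂ) - seriesValue A 1 * ((z : ℂ) ^ J / J.factorial)‖ ≤
      (J + 1) ^ (J + 1) * (M * (z : ℝ) ^ (J - 1) * Y) := by
  have hM : ‖seriesValue A 1‖ ≤ M := by simpa using h.norm_seriesValue_le 0
  have hM0 : 0 ≤ M := h.nonneg
  rw [← mul_sub, norm_mul, ← Complex.ofReal_natCast, ← Complex.ofReal_natCast z,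
    ← Complex.ofReal_natCast J.factorial, ← Complex.ofReal_pow, ← Complex.ofReal_div,
    ← Complex.ofReal_sub, Complex.norm_real, Real.norm_eq_abs]
  calc _ ≤ M * ((J + 1) ^ (J + 1) * (z : ℝ) ^ (J - 1)) := by
        gcongr
        exact abs_choose_add_sub_le J z hz
    _ = (J + 1) ^ (J + 1) * (M * (z : ℝ) ^ (J - 1) * 1) := by ring
    _ ≤ _ := by gcongr; exact h.one_le

/-- The implied constant of `norm_sum_coeff_mul_choose_sub_le`. -/
def errorConst (r b : ℝ) (J : ℕ) : ℝ :=
  (J + 1) ^ (J + 1) + ∑ i ∈ Finset.range J, 2 ^ (i + 1) * b ^ i * (J + 1) ^ J +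
    ((r - 1) ^ (J + 1))⁻¹

lemma norm_sum_coeff_mul_choose_sub_le (h : PoleAtOne p r N Y M A B) {z : ℕ} (hz : 1 ≤ z)
    (hY : Y ≤ b * z) (j : ℕ) :
    ‖∑ n ∈ Finset.range (z + 1), PowerSeries.coeff n B * ((j + (z - n)).choose j : ℂ) -
        seriesValue A 1 * ((z : ℂ) ^ (j + p) / (j + p).factorial)‖ ≤
      errorConst r b (j + p) * (M * (z : ℝ) ^ (j + p - 1) * Y + N / r ^ z) := by
  have hM : 0 ≤ M := h.nonneg
  have hN : 0 ≤ N := h.l1Sum_le 0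
  have hr := h.one_lt
  have hY1 := h.one_le
  have hb := h.nonneg_of_le_mul hY
  rw [sum_coeff_mul_choose_eq hr h.l1Sum_le h.mul_eq, Finset.sum_range_succ', errorConst]
  set J := j + p
  have hmain := h.norm_seriesValue_mul_choose_sub_le hz J
  have hlower := norm_sum_le_of_le (Finset.range J) fun i hi ↦
    h.norm_seriesValue_mul_choose_le hz hY (Finset.mem_range.1 hi)
  have htail := h.norm_coeff_iterate_le (J + 1) z
  rw [← Finset.sum_mul] at hlower
  set c : ℝ := ∑ i ∈ Finset.range J, 2 ^ (i + 1) * b ^ i * (J + 1) ^ J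
  have hc : 0 ≤ c := Finset.sum_nonneg fun i _ ↦ by positivity
  have hr1 : 0 ≤ ((r - 1) ^ (J + 1))⁻¹ := inv_nonneg.2 (pow_nonneg (by linarith) _)
  have hW : 0 ≤ M * (z : ℝ) ^ (J - 1) * Y := by positivity
  have hV : 0 ≤ N / r ^ z := by positivity
  calc _ = ‖(seriesValue A 1 * ((J + z).choose J : ℂ) -
        seriesValue A 1 * ((z : ℂ) ^ J / J.factorial)) +
        ∑ i ∈ Finset.range J, seriesValue (divOneSub^[i + 1] A) 1 *
          ((J - (i + 1) + z).choose (J - (i + 1)) : ℂ) +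
        PowerSeries.coeff z (divOneSub^[J + 1] A)‖ := by
        congr 1
        simp only [Function.iterate_zero, id_eq, Nat.sub_zero]
        ring
    _ ≤ (J + 1) ^ (J + 1) * (M * (z : ℝ) ^ (J - 1) * Y) + c * (M * (z : ℝ) ^ (J - 1) * Y) +
          ((r - 1) ^ (J + 1))⁻¹ * (N / r ^ z) :=
        norm_add₃_le.trans (add_le_add_three hmain hlower htail)
    _ ≤ _ := by
        have hJ : (0 : ℝ) ≤ (J + 1) ^ (J + 1) := by positivity
        nlinarith [mul_nonneg hJ hV, mul_nonneg hc hV, mul_nonneg hr1 hW]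

lemma errorConst_nonneg (hr : 1 ≤ r) (hb : 0 ≤ b) (J : ℕ) : 0 ≤ errorConst r b J := by
  have : 0 ≤ r - 1 := by linarith
  unfold errorConst
  positivity

lemma norm_sum_coeff_mul_choose_le (h : PoleAtOne p r N Y M A B) {z : ℕ} (hz : 1 ≤ z)
    (hY : Y ≤ b * z) {j k : ℕ} (hj : j < k) :
    ‖∑ n ∈ Finset.range (z + 1), PowerSeries.coeff n B * ((j + (z - n)).choose j : ℂ)‖ ≤
      (1 + errorConst r b (j + p)) * (M * (z : ℝ) ^ (k + p - 1) * Y + N / r ^ z) := by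
  have hz' : (1 : ℝ) ≤ z := by exact_mod_cast hz
  have hr := h.one_lt
  have hM : 0 ≤ M := h.nonneg
  have hN : 0 ≤ N := h.l1Sum_le 0
  have hY1 := h.one_le
  have he := errorConst_nonneg hr.le (h.nonneg_of_le_mul hY) (j + p)
  have hmain : ‖seriesValue A 1 * ((z : ℂ) ^ (j + p) / (j + p).factorial)‖ ≤
      M * (z : ℝ) ^ (k + p - 1) * Y + N / r ^ z := by
    rw [norm_mul, norm_div, norm_pow, Complex.norm_natCast, Complex.norm_natCast]
    calc ‖seriesValue A 1‖ * ((z : ℝ) ^ (j + p) / (j + p).factorial)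
        ≤ M * (z : ℝ) ^ (k + p - 1) := by
          gcongr ?_ * ?_
          · simpa using h.norm_seriesValue_le 0
          · refine (div_le_self (by positivity) ?_).trans (pow_le_pow_right₀ hz' (by omega))
            exact_mod_cast (j + p).factorial_pos
      _ ≤ M * (z : ℝ) ^ (k + p - 1) * Y := le_mul_of_one_le_right (by positivity) hY1
      _ ≤ _ := le_add_of_nonneg_right (by positivity)
  have herr : M * (z : ℝ) ^ (j + p - 1) * Y + N / r ^ z ≤
      M * (z : ℝ) ^ (k + p - 1) * Y + N / r ^ z := by
    gcongr
  calc _ ≤ ‖_‖ + ‖_‖ := norm_le_norm_sub_add _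
        (seriesValue A 1 * ((z : ℂ) ^ (j + p) / (j + p).factorial))
    _ ≤ errorConst r b (j + p) * (M * (z : ℝ) ^ (k + p - 1) * Y + N / r ^ z) +
          (M * (z : ℝ) ^ (k + p - 1) * Y + N / r ^ z) :=
        add_le_add ((h.norm_sum_coeff_mul_choose_sub_le hz hY j).trans (by gcongr)) hmain
    _ = _ := by ring

end PoleAtOne

lemma exists_pow_eq_sum_mul_choose (k : ℕ) : ∃ α : ℕ → ℝ, α k = k.factorial ∧
    ∀ m : ℕ, (m : ℝ) ^ k = ∑ j ∈ Finset.range (k + 1), α j * (j + m).choose j := by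
  induction k with
  | zero => exact ⟨fun _ ↦ 1, by simp⟩
  | succ k ih =>
    obtain ⟨α, hk, hα⟩ := ih
    have hmul : ∀ m j : ℕ, (m : ℝ) * (j + m).choose j =
        (j + 1) * (j + 1 + m).choose (j + 1) - (j + 1) * (j + m).choose j := by
      intro m j
      have h := Nat.add_one_mul_choose_eq (j + m) j
      rw [show j + m + 1 = j + 1 + m by ring] at h
      have h' : ((j + 1 + m : ℕ) : ℝ) * (j + m).choose j =
          (j + 1 + m).choose (j + 1) * (j + 1) := by exact_mod_cast h
      push_cast at h'
      linarith
    refine ⟨fun j ↦ j * α (j - 1) - if j ≤ k then (j + 1) * α j else 0, ?_, fun m ↦ ?_⟩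
    · simp [hk, Nat.factorial_succ]
    · have hup : ∑ j ∈ Finset.range (k + 1 + 1), (j : ℝ) * α (j - 1) * (j + m).choose j =
          ∑ j ∈ Finset.range (k + 1), (j + 1) * α j * (j + 1 + m).choose (j + 1) := by
        simp [Finset.sum_range_succ' _ (k + 1)]
      have hsame : ∑ j ∈ Finset.range (k + 1 + 1),
          (if j ≤ k then (j + 1) * α j else 0) * ((j + m).choose j : ℝ) =
          ∑ j ∈ Finset.range (k + 1), (j + 1) * α j * (j + m).choose j := by
        rw [Finset.sum_range_succ, if_neg (by simp), zero_mul, add_zero]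
        exact Finset.sum_congr rfl fun j hj ↦ by
          rw [if_pos (Finset.mem_range_succ_iff.1 hj)]
      simp only [sub_mul, Finset.sum_sub_distrib, hup, hsame]
      rw [pow_succ', hα, Finset.mul_sum, ← Finset.sum_sub_distrib]
      exact Finset.sum_congr rfl fun j _ ↦ by linear_combination α j * hmul m j

theorem exists_norm_sum_coeff_mul_pow_sub_le (k p : ℕ) (r b : ℝ) :
    ∃ C : ℝ, ∀ {N Y M : ℝ} {A B : PowerSeries ℂ} {z : ℕ}, PoleAtOne p r N Y M A B → 1 ≤ z →
      Y ≤ b * z →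
      ‖∑ n ∈ Finset.range (z + 1), PowerSeries.coeff n B * ((z - n : ℕ) : ℂ) ^ k -
          seriesValue A 1 * (k.factorial / (k + p).factorial * (z : ℂ) ^ (k + p))‖ ≤
        C * (M * (z : ℝ) ^ (k + p - 1) * Y + N / r ^ z) := by
  obtain ⟨α, hk, hα⟩ := exists_pow_eq_sum_mul_choose k
  refine ⟨∑ j ∈ Finset.range k, |α j| * (1 + PoleAtOne.errorConst r b (j + p)) +
    k.factorial * PoleAtOne.errorConst r b (k + p), fun {N Y M A B z} h hz hY ↦ ?_⟩
  set S : ℕ → ℂ := fun j ↦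
    ∑ n ∈ Finset.range (z + 1), PowerSeries.coeff n B * ((j + (z - n)).choose j : ℂ) with hS
  have hexpand : ∑ n ∈ Finset.range (z + 1), PowerSeries.coeff n B * ((z - n : ℕ) : ℂ) ^ k =
      ∑ j ∈ Finset.range (k + 1), (α j : ℂ) * S j := by
    have hα' : ∀ m : ℕ, (m : ℂ) ^ k =
        ∑ j ∈ Finset.range (k + 1), (α j : ℂ) * ((j + m).choose j : ℂ) := fun m ↦ by
      exact_mod_cast congrArg ((↑) : ℝ → ℂ) (hα m)
    simp only [hS, hα', Finset.mul_sum]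
    rw [Finset.sum_comm]
    exact Finset.sum_congr rfl fun j _ ↦ Finset.sum_congr rfl fun n _ ↦ by ring
  have hlow : ∀ j ∈ Finset.range k, ‖(α j : ℂ) * S j‖ ≤
      |α j| * (1 + PoleAtOne.errorConst r b (j + p)) *
        (M * (z : ℝ) ^ (k + p - 1) * Y + N / r ^ z) := fun j hj ↦ by
    rw [norm_mul, Complex.norm_real, Real.norm_eq_abs, mul_assoc]
    gcongr
    exact h.norm_sum_coeff_mul_choose_le hz hY (Finset.mem_range.1 hj)
  calc _ = ‖∑ j ∈ Finset.range k, (α j : ℂ) * S j + k.factorial *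
        (S k - seriesValue A 1 * ((z : ℂ) ^ (k + p) / (k + p).factorial))‖ := by
        rw [hexpand, Finset.sum_range_succ, hk]
        congr 1
        push_cast
        ring
    _ ≤ ∑ j ∈ Finset.range k, |α j| * (1 + PoleAtOne.errorConst r b (j + p)) *
          (M * (z : ℝ) ^ (k + p - 1) * Y + N / r ^ z) +
        k.factorial * (PoleAtOne.errorConst r b (k + p) *
          (M * (z : ℝ) ^ (k + p - 1) * Y + N / r ^ z)) := by
        refine (norm_add_le _ _).trans (add_le_add (norm_sum_le_of_le _ hlow) ?_)
        rw [norm_mul, Complex.norm_natCast]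
        gcongr
        exact h.norm_sum_coeff_mul_choose_sub_le hz hY k
    _ = _ := by rw [← Finset.sum_mul]; ring

end PoleAtOne

section PrimeDivisors

variable {F : Type} [Field F]

open Classical in
/-- The finite set of monic prime divisors of `N`, empty for `N = 0`. -/
def primeDivisors (N : Polynomial F) : Finset (Polynomial F) :=
  UniqueFactorizationMonoid.primeFactors N

variable {M N P Q : Polynomial F}

lemma mem_primeDivisors (hN : N ≠ 0) : P ∈ primeDivisors N ↔ IsMonicPrime P ∧ P ∣ N := by
  classical
  rw [primeDivisors, UniqueFactorizationMonoid.mem_primeFactors,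
    Polynomial.mem_normalizedFactors_iff hN, IsMonicPrime]
  tauto

lemma IsMonicPrime.eq_of_dvd (hP : IsMonicPrime P) (hQ : IsMonicPrime Q) (h : P ∣ Q) : P = Q :=
  Polynomial.eq_of_monic_of_associated hP.1 hQ.1 (hP.2.associated_of_dvd hQ.2 h)

lemma primeDivisors_one : primeDivisors (1 : Polynomial F) = ∅ := by
  classical
  exact UniqueFactorizationMonoid.primeFactors_one

lemma IsMonicPrime.primeDivisors_eq (hP : IsMonicPrime P) : primeDivisors P = {P} := by
  ext Q
  rw [mem_primeDivisors hP.1.ne_zero, Finset.mem_singleton]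
  exact ⟨fun h ↦ h.1.eq_of_dvd hP h.2, fun h ↦ by subst h; exact ⟨hP, dvd_rfl⟩⟩

open Classical in
lemma primeDivisors_mul (hM : M ≠ 0) (hN : N ≠ 0) :
    primeDivisors (M * N) = primeDivisors M ∪ primeDivisors N := by
  rw [primeDivisors, UniqueFactorizationMonoid.primeFactors_mul_eq_union hM hN]
  rfl

lemma sum_natDegree_primeDivisors_le (hN : N ≠ 0) :
    ∑ P ∈ primeDivisors N, P.natDegree ≤ N.natDegree := by
  classical
  rw [← Polynomial.natDegree_prod_of_monic _ _ fun P hP ↦ ((mem_primeDivisors hN).1 hP).1.1]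
  exact Polynomial.natDegree_le_of_dvd UniqueFactorizationMonoid.radical_dvd_self hN

/-- The product of `τ P` over the monic prime divisors `P` of `N`. -/
def primeWeight {K : Type*} [CommMonoid K] (τ : Polynomial F → K) (N : Polynomial F) : K :=
  ∏ P ∈ primeDivisors N, τ P

variable {K : Type*} [CommSemiring K]

open Classical in
lemma primeWeight_update_eq_ite (hP : IsMonicPrime P) (hN : N ≠ 0) (τ : Polynomial F → K)
    (a : K) :
    primeWeight (Function.update τ P 0) N =
      if P ∣ N then 0 else primeWeight (Function.update τ P a) N := by
  split_ifs with h
  · exact Finset.prod_eq_zero ((mem_primeDivisors hN).2 ⟨hP, h⟩) (Function.update_self ..)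
  · refine Finset.prod_congr rfl fun Q hQ ↦ ?_
    have hQP : Q ≠ P := fun hQP ↦ h (hQP ▸ ((mem_primeDivisors hN).1 hQ).2)
    rw [Function.update_of_ne hQP, Function.update_of_ne hQP]

open Classical in
lemma primeWeight_update_mul (hP : IsMonicPrime P) (hN : N ≠ 0) (τ : Polynomial F → K) (a : K) :
    primeWeight (Function.update τ P a) (P * N) =
      a * primeWeight (Function.update τ P 1) N := by
  have hPN : primeDivisors (P * N) = insert P ((primeDivisors N).erase P) := by
    rw [primeDivisors_mul hP.1.ne_zero hN, hP.primeDivisors_eq, ← Finset.insert_eq]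
    ext Q
    simp only [Finset.mem_insert, Finset.mem_erase]
    tauto
  rw [primeWeight, primeWeight, hPN, Finset.prod_insert (Finset.notMem_erase P _),
    ← Finset.prod_erase _ (Function.update_self P 1 τ), Function.update_self]
  congr 1
  refine Finset.prod_congr rfl fun Q hQ ↦ ?_
  have hQP := Finset.ne_of_mem_erase hQ
  rw [Function.update_of_ne hQP, Function.update_of_ne hQP]

end PrimeDivisors

section MonicsOfDegree

variable (F : Type) [Field F]

/-- The coefficients of the monic polynomials of degree `n` other than the leading one. -/
def monicEquivFun (n : ℕ) : {N : Polynomial F // N.Monic ∧ N.natDegree = n} ≃ (Fin n → F) :=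
  (Polynomial.monicEquivDegreeLT n).trans (Polynomial.degreeLTEquiv F n).toEquiv

variable [Finite F]

lemma finite_monics (n : ℕ) : {N : Polynomial F | N.Monic ∧ N.natDegree = n}.Finite :=
  Set.finite_coe_iff.1 (Finite.of_equiv _ (monicEquivFun F n).symm)

/-- The finite set of monic polynomials of degree `n`. -/
def monics (n : ℕ) : Finset (Polynomial F) :=
  (finite_monics F n).toFinset

open Classical in
/-- The finite set of monic primes of degree at most `n`. -/
def primesLE (n : ℕ) : Finset (Polynomial F) :=
  {P ∈ (Finset.range (n + 1)).biUnion (monics F) | IsMonicPrime P}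

variable {F} {n : ℕ} {N P : Polynomial F}

lemma mem_monics : N ∈ monics F n ↔ N.Monic ∧ N.natDegree = n := by
  simp [monics]

lemma monics_zero : monics F 0 = {1} := by
  ext N
  rw [mem_monics, Finset.mem_singleton]
  exact ⟨fun h ↦ Polynomial.eq_one_of_monic_natDegree_zero h.1 h.2, fun h ↦ by simp [h]⟩

lemma mem_primesLE : P ∈ primesLE F n ↔ IsMonicPrime P ∧ P.natDegree ≤ n := by
  simp only [primesLE, Finset.mem_filter, Finset.mem_biUnion, Finset.mem_range, mem_monics]
  exact ⟨fun ⟨⟨_, hm, _, hd⟩, hP⟩ ↦ ⟨hP, hd ▸ Nat.lt_succ_iff.1 hm⟩,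
    fun h ↦ ⟨⟨_, Nat.lt_succ_iff.2 h.2, h.1.1, rfl⟩, h.1⟩⟩

end MonicsOfDegree

section Cardinality

variable {F : Type} [Field F] [Fintype F]

lemma card_monics (n : ℕ) : (monics F n).card = Fintype.card F ^ n := by
  rw [← Nat.card_eq_finsetCard,
    Nat.card_congr ((Equiv.subtypeEquivRight fun _ ↦ mem_monics).trans (monicEquivFun F n))]
  simp

lemma mul_card_filter_natDegree_le {S : Finset (Polynomial F)} (hS : ∀ P ∈ S, IsMonicPrime P)
    (e : ℕ) : e * (S.filter fun P ↦ P.natDegree = e).card ≤ Fintype.card F ^ e := by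
  rcases eq_or_ne e 0 with rfl | he
  · simp
  have hq : 1 < Nat.card F := Finite.one_lt_card
  have hdvd : ∏ P ∈ S.filter fun P ↦ P.natDegree = e, P ∣
      (Polynomial.X ^ Nat.card F ^ e - Polynomial.X : Polynomial F) := by
    refine Finset.prod_dvd_of_coprime (fun P hP Q hQ hne ↦ ?_) fun P hP ↦ ?_
    · rw [Finset.mem_coe, Finset.mem_filter] at hP hQ
      exact (hS P hP.1).2.coprime_iff_not_dvd.2 fun h ↦ hne ((hS P hP.1).eq_of_dvd (hS Q hQ.1) h)
    · obtain ⟨hPS, hPe⟩ := Finset.mem_filter.1 hP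
      exact (hS P hPS).2.natDegree_dvd_iff_dvd_X_pow_card_pow_sub_X.1 hPe.dvd
  have h := Polynomial.natDegree_le_of_dvd hdvd
    (FiniteField.X_pow_card_pow_sub_X_ne_zero _ he hq)
  rwa [FiniteField.X_pow_card_pow_sub_X_natDegree_eq _ he hq,
    Polynomial.natDegree_prod_of_monic _ _ fun P hP ↦ (hS P (Finset.mem_filter.1 hP).1).1,
    Finset.sum_congr rfl fun P hP ↦ (Finset.mem_filter.1 hP).2, Finset.sum_const,
    smul_eq_mul, Nat.card_eq_fintype_card, mul_comm] at h

end Cardinality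

section DegreeSeries

variable {F : Type} [Field F] [Finite F] {K : Type*} [CommRing K]

/-- The generating series `∑ f(N) X^(deg N)` over monic `N`: the Dirichlet series of `f` in the
variable `X = q⁻ˢ`. -/
def degreeSeries (f : Polynomial F → K) : PowerSeries K :=
  PowerSeries.mk fun n ↦ ∑ N ∈ monics F n, f N

lemma degreeSeries_congr {f g : Polynomial F → K} (h : ∀ N, N.Monic → f N = g N) :
    degreeSeries f = degreeSeries g := by
  ext n
  simp only [degreeSeries, PowerSeries.coeff_mk]
  exact Finset.sum_congr rfl fun N hN ↦ h N (mem_monics.1 hN).1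

lemma degreeSeries_const_mul (a : K) (f : Polynomial F → K) :
    degreeSeries (fun N ↦ a * f N) = PowerSeries.C a * degreeSeries f := by
  ext n
  simp [degreeSeries, Finset.mul_sum]

lemma sum_monics_mul_eq_sum_filter_dvd {P : Polynomial F} (hP : P.Monic) (f : Polynomial F → K)
    (n : ℕ) [DecidablePred (P ∣ ·)] :
    ∑ N ∈ monics F n, f (P * N) = ∑ N ∈ monics F (P.natDegree + n) with P ∣ N, f N := by
  refine Finset.sum_bij (fun N _ ↦ P * N) (fun N hN ↦ ?_)
    (fun _ _ _ _ h ↦ mul_left_cancel₀ hP.ne_zero h) (fun N hN ↦ ?_) fun _ _ ↦ rfl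
  · rw [mem_monics] at hN
    rw [Finset.mem_filter, mem_monics]
    exact ⟨⟨hP.mul hN.1, by rw [hP.natDegree_mul hN.1, hN.2]⟩, dvd_mul_right _ _⟩
  · rw [Finset.mem_filter, mem_monics] at hN
    obtain ⟨⟨hm, hd⟩, Q, rfl⟩ := hN
    have hQ := hP.of_mul_monic_left hm
    rw [hP.natDegree_mul hQ] at hd
    exact ⟨Q, mem_monics.2 ⟨hQ, by omega⟩, rfl⟩

open Classical in
lemma degreeSeries_eq_add_X_pow_mul {P : Polynomial F} (hP : P.Monic) (f : Polynomial F → K) :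
    degreeSeries f = degreeSeries (fun N ↦ if P ∣ N then 0 else f N) +
      PowerSeries.X ^ P.natDegree * degreeSeries (fun N ↦ f (P * N)) := by
  ext n
  simp only [degreeSeries, map_add, PowerSeries.coeff_mk, PowerSeries.coeff_X_pow_mul']
  rw [← Finset.sum_filter_not_add_sum_filter (monics F n) (P ∣ ·), Finset.sum_filter]
  simp only [ite_not]
  congr 1
  split_ifs with hd
  · rw [sum_monics_mul_eq_sum_filter_dvd hP, Nat.add_sub_cancel' hd]
  · refine Finset.sum_eq_zero fun N hN ↦ absurd ?_ hd
    rw [Finset.mem_filter, mem_monics] at hN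
    exact hN.1.2 ▸ Polynomial.natDegree_le_of_dvd hN.2 hN.1.1.ne_zero

open Classical in
lemma degreeSeries_primeWeight_update {P : Polynomial F} (hP : IsMonicPrime P)
    (τ : Polynomial F → K) (a : K) :
    degreeSeries (primeWeight (Function.update τ P a)) =
      degreeSeries (primeWeight (Function.update τ P 0)) +
        PowerSeries.C a * PowerSeries.X ^ P.natDegree *
          degreeSeries (primeWeight (Function.update τ P 1)) := by
  rw [degreeSeries_eq_add_X_pow_mul hP.1,
    degreeSeries_congr fun N hN ↦ (primeWeight_update_eq_ite hP hN.ne_zero τ a).symm,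
    degreeSeries_congr fun N hN ↦ primeWeight_update_mul hP hN.ne_zero τ a,
    degreeSeries_const_mul]
  ring

open Classical in
lemma one_sub_X_pow_mul_degreeSeries {P : Polynomial F} (hP : IsMonicPrime P)
    (τ : Polynomial F → K) :
    (1 - PowerSeries.X ^ P.natDegree) * degreeSeries (primeWeight τ) =
      (1 + PowerSeries.C (τ P - 1) * PowerSeries.X ^ P.natDegree) *
        degreeSeries (primeWeight (Function.update τ P 0)) := by
  have h1 := degreeSeries_primeWeight_update hP τ 1
  have h2 := degreeSeries_primeWeight_update hP τ (τ P)
  rw [Function.update_eq_self] at h2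
  rw [map_one] at h1
  rw [map_sub, map_one]
  linear_combination (1 - PowerSeries.X ^ P.natDegree) * h2 +
    PowerSeries.C (τ P) * PowerSeries.X ^ P.natDegree * h1

open Classical in
lemma prod_one_sub_X_pow_mul_degreeSeries {S : Finset (Polynomial F)}
    (hS : ∀ P ∈ S, IsMonicPrime P) (τ : Polynomial F → K) :
    (∏ P ∈ S, (1 - PowerSeries.X ^ P.natDegree)) * degreeSeries (primeWeight τ) =
      (∏ P ∈ S, (1 + PowerSeries.C (τ P - 1) * PowerSeries.X ^ P.natDegree)) *
        degreeSeries (primeWeight (S.piecewise 0 τ)) := by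
  induction S using Finset.induction_on with
  | empty => simp
  | insert P S hPS ih =>
    have h := one_sub_X_pow_mul_degreeSeries (hS P (Finset.mem_insert_self _ _)) (S.piecewise 0 τ)
    rw [Finset.piecewise_eq_of_notMem _ _ _ hPS] at h
    rw [Finset.piecewise_insert, Pi.zero_apply, Finset.prod_insert hPS, Finset.prod_insert hPS,
      mul_assoc, ih fun Q hQ ↦ hS Q (Finset.mem_insert_of_mem hQ)]
    linear_combination
      (∏ P ∈ S, (1 + PowerSeries.C (τ P - 1) * PowerSeries.X ^ P.natDegree)) * h

open Classical in
lemma X_pow_dvd_degreeSeries_piecewise_sub_one (n : ℕ) (τ : Polynomial F → K) :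
    PowerSeries.X ^ (n + 1) ∣
      degreeSeries (primeWeight ((primesLE F n).piecewise 0 τ)) - 1 := by
  rw [PowerSeries.X_pow_dvd_iff]
  intro m hm
  rw [map_sub, sub_eq_zero, degreeSeries, PowerSeries.coeff_mk, PowerSeries.coeff_one]
  split_ifs with h0
  · rw [h0, monics_zero, Finset.sum_singleton, primeWeight, primeDivisors_one, Finset.prod_empty]
  · refine Finset.sum_eq_zero fun N hN ↦ ?_
    obtain ⟨hmonic, hdeg⟩ := mem_monics.1 hN
    obtain ⟨P, hPm, hPi, hPN⟩ := Polynomial.exists_monic_irreducible_factor N fun hu ↦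
      h0 (hdeg ▸ Polynomial.natDegree_eq_zero_of_isUnit hu)
    have hP : P ∈ primesLE F n := mem_primesLE.2 ⟨⟨hPm, hPi⟩,
      (Polynomial.natDegree_le_of_dvd hPN hmonic.ne_zero).trans (by omega)⟩
    exact Finset.prod_eq_zero ((mem_primeDivisors hmonic.ne_zero).2 ⟨⟨hPm, hPi⟩, hPN⟩)
      (Finset.piecewise_eq_of_mem _ _ _ hP)

lemma isUnit_one_sub_X_pow {d : ℕ} (hd : d ≠ 0) :
    IsUnit (1 - PowerSeries.X ^ d : PowerSeries K) := by
  simp [PowerSeries.isUnit_iff_constantCoeff, hd]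

variable {S : Finset (Polynomial F)} {τ : Polynomial F → K}

lemma prod_one_add_X_pow_mul_degreeSeries (hS : ∀ P ∈ S, IsMonicPrime P)
    (hτ : ∀ P ∉ S, τ P = 2) :
    (∏ P ∈ S, (1 + PowerSeries.X ^ P.natDegree)) * degreeSeries (primeWeight τ) =
      (∏ P ∈ S, (1 + PowerSeries.C (τ P - 1) * PowerSeries.X ^ P.natDegree)) *
        degreeSeries (primeWeight fun _ : Polynomial F ↦ 2) := by
  classical
  have h1 := prod_one_sub_X_pow_mul_degreeSeries hS τ
  have h2 := prod_one_sub_X_pow_mul_degreeSeries hS fun _ : Polynomial F ↦ (2 : K)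
  rw [show (2 : K) - 1 = 1 by norm_num] at h2
  simp only [map_one, one_mul] at h2
  have hτ' : S.piecewise 0 τ = S.piecewise 0 fun _ : Polynomial F ↦ (2 : K) :=
    S.piecewise_congr (fun _ _ ↦ rfl) hτ
  rw [hτ'] at h1
  have hunit : IsUnit (∏ P ∈ S, (1 - PowerSeries.X ^ P.natDegree : PowerSeries K)) :=
    IsUnit.prod_iff.2 fun P hP ↦ isUnit_one_sub_X_pow (hS P hP).2.natDegree_pos.ne'
  refine hunit.mul_left_cancel ?_
  linear_combination (∏ P ∈ S, (1 + PowerSeries.X ^ P.natDegree)) * h1 -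
    (∏ P ∈ S, (1 + PowerSeries.C (τ P - 1) * PowerSeries.X ^ P.natDegree)) * h2

end DegreeSeries

section EulerProduct

variable {F : Type} [Field F] [Fintype F] {K : Type*} [CommRing K]

lemma one_sub_mul_degreeSeries_one :
    (1 - PowerSeries.C (Fintype.card F : K) * PowerSeries.X) *
      degreeSeries (primeWeight fun _ : Polynomial F ↦ (1 : K)) = 1 := by
  have h : degreeSeries (primeWeight fun _ : Polynomial F ↦ (1 : K)) =
      PowerSeries.rescale (Fintype.card F : K) (PowerSeries.mk 1) := by
    ext n
    simp [degreeSeries, primeWeight, card_monics]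
  rw [h, ← PowerSeries.rescale_X, ← map_one (PowerSeries.rescale (Fintype.card F : K)), ← map_sub,
    ← map_mul, mul_comm, PowerSeries.mk_one_mul_one_sub_eq_one]

lemma X_pow_dvd_prod_primesLE_sub (n : ℕ) :
    PowerSeries.X ^ (n + 1) ∣ ∏ P ∈ primesLE F n, (1 - PowerSeries.X ^ P.natDegree) -
      (1 - PowerSeries.C (Fintype.card F : K) * PowerSeries.X) := by
  classical
  have hS : ∀ P ∈ primesLE F n, IsMonicPrime P := fun P hP ↦ (mem_primesLE.1 hP).1
  have h := prod_one_sub_X_pow_mul_degreeSeries hS fun _ ↦ (1 : K)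
  simp only [sub_self, map_zero, zero_mul, add_zero, Finset.prod_const_one, one_mul] at h
  convert (X_pow_dvd_degreeSeries_piecewise_sub_one n fun _ : Polynomial F ↦ (1 : K)).mul_left
    (1 - PowerSeries.C (Fintype.card F : K) * PowerSeries.X) using 1
  rw [← h]
  linear_combination (-∏ P ∈ primesLE F n, (1 - PowerSeries.X ^ P.natDegree)) *
    one_sub_mul_degreeSeries_one (F := F) (K := K)

lemma X_pow_dvd_prod_primesLE_mul_prod_sub (n : ℕ) :
    PowerSeries.X ^ (n + 1) ∣
      (∏ P ∈ primesLE F n, (1 - PowerSeries.X ^ P.natDegree)) *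
        ∏ P ∈ primesLE F n, (1 + PowerSeries.X ^ P.natDegree) -
      (1 - PowerSeries.C (Fintype.card F : K) * PowerSeries.X ^ 2) := by
  have h := map_dvd (PowerSeries.expand (R := K) 2 two_ne_zero)
    (X_pow_dvd_prod_primesLE_sub (F := F) n)
  simp only [map_pow, map_sub, map_prod, map_one, map_mul, PowerSeries.expand_X,
    PowerSeries.expand_C] at h
  rw [← Finset.prod_mul_distrib]
  refine (pow_dvd_pow PowerSeries.X (by omega : n + 1 ≤ 2 * (n + 1))).trans ?_
  rw [pow_mul]
  convert h using 3
  ring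

-- In terms of zeta functions, `∑ 2^ω(N) |N|⁻ˢ = ζ(s)² / ζ(2s)`.
theorem one_sub_sq_mul_degreeSeries_two :
    (1 - PowerSeries.C (Fintype.card F : K) * PowerSeries.X) ^ 2 *
        degreeSeries (primeWeight fun _ : Polynomial F ↦ (2 : K)) =
      1 - PowerSeries.C (Fintype.card F : K) * PowerSeries.X ^ 2 := by
  classical
  suffices h : ∀ n : ℕ, PowerSeries.X ^ (n + 1) ∣
      (1 - PowerSeries.C (Fintype.card F : K) * PowerSeries.X) ^ 2 *
          degreeSeries (primeWeight fun _ : Polynomial F ↦ (2 : K)) -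
        (1 - PowerSeries.C (Fintype.card F : K) * PowerSeries.X ^ 2) by
    ext n
    rw [← sub_eq_zero, ← map_sub]
    exact PowerSeries.X_pow_dvd_iff.1 (h n) n n.lt_succ_self
  intro n
  have hS : ∀ P ∈ primesLE F n, IsMonicPrime P := fun P hP ↦ (mem_primesLE.1 hP).1
  have hD := prod_one_sub_X_pow_mul_degreeSeries hS fun _ : Polynomial F ↦ (2 : K)
  rw [show (2 : K) - 1 = 1 by norm_num] at hD
  simp only [map_one, one_mul] at hD
  have hminus := X_pow_dvd_prod_primesLE_sub (F := F) (K := K) n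
  have hmul := X_pow_dvd_prod_primesLE_mul_prod_sub (F := F) (K := K) n
  have hE := X_pow_dvd_degreeSeries_piecewise_sub_one n fun _ : Polynomial F ↦ (2 : K)
  set D := degreeSeries (primeWeight fun _ : Polynomial F ↦ (2 : K))
  set E := degreeSeries (primeWeight ((primesLE F n).piecewise 0 fun _ ↦ (2 : K)))
  set Pm := ∏ P ∈ primesLE F n, (1 - PowerSeries.X ^ P.natDegree : PowerSeries K)
  set Pp := ∏ P ∈ primesLE F n, (1 + PowerSeries.X ^ P.natDegree : PowerSeries K)
  set a := 1 - PowerSeries.C (Fintype.card F : K) * PowerSeries.X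
  set b := 1 - PowerSeries.C (Fintype.card F : K) * PowerSeries.X ^ 2
  have hsplit : a ^ 2 * D - b =
      Pm * Pp * (E - 1) + (Pm * Pp - b) - (Pm + a) * D * (Pm - a) := by
    linear_combination Pm * hD
  rw [hsplit]
  exact dvd_sub (dvd_add (hE.mul_left _) hmul) (hminus.mul_left _)

variable {S : Finset (Polynomial F)} {τ : Polynomial F → K}

lemma prod_mul_one_sub_sq_mul_degreeSeries (hS : ∀ P ∈ S, IsMonicPrime P)
    (hτ : ∀ P ∉ S, τ P = 2) :
    (∏ P ∈ S, (1 + PowerSeries.X ^ P.natDegree)) *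
        ((1 - PowerSeries.C (Fintype.card F : K) * PowerSeries.X) ^ 2 *
          degreeSeries (primeWeight τ)) =
      (1 - PowerSeries.C (Fintype.card F : K) * PowerSeries.X ^ 2) *
        ∏ P ∈ S, (1 + PowerSeries.C (τ P - 1) * PowerSeries.X ^ P.natDegree) := by
  rw [← one_sub_sq_mul_degreeSeries_two]
  linear_combination (1 - PowerSeries.C (Fintype.card F : K) * PowerSeries.X) ^ 2 *
    prod_one_add_X_pow_mul_degreeSeries hS hτ

lemma rescale_C_mul_X_pow (a b : K) (d : ℕ) :
    PowerSeries.rescale a (PowerSeries.C b * PowerSeries.X ^ d) =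
      PowerSeries.monomial d (b * a ^ d) := by
  ext n
  rw [PowerSeries.coeff_rescale, PowerSeries.coeff_C_mul, PowerSeries.coeff_X_pow,
    PowerSeries.coeff_monomial]
  split_ifs with h
  · rw [h]
    ring
  · ring

lemma prod_mul_one_sub_X_sq_mul_rescale {K : Type*} [Field K] {τ : Polynomial F → K}
    (hq : (Fintype.card F : K) ≠ 0) (hS : ∀ P ∈ S, IsMonicPrime P) (hτ : ∀ P ∉ S, τ P = 2) :
    (∏ P ∈ S, (1 + PowerSeries.monomial P.natDegree ((Fintype.card F : K)⁻¹ ^ P.natDegree))) *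
        ((1 - PowerSeries.X) ^ 2 *
          PowerSeries.rescale (Fintype.card F : K)⁻¹ (degreeSeries (primeWeight τ))) =
      (1 + PowerSeries.monomial 2 (-(Fintype.card F : K)⁻¹)) *
        ∏ P ∈ S, (1 + PowerSeries.monomial P.natDegree
          ((τ P - 1) * (Fintype.card F : K)⁻¹ ^ P.natDegree)) := by
  have hlin : PowerSeries.rescale (Fintype.card F : K)⁻¹
      (1 - PowerSeries.C (Fintype.card F : K) * PowerSeries.X) = 1 - PowerSeries.X := by
    have h := rescale_C_mul_X_pow (Fintype.card F : K)⁻¹ (Fintype.card F : K) 1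
    rw [pow_one, pow_one, mul_inv_cancel₀ hq, ← PowerSeries.X_eq] at h
    rw [map_sub, map_one, h]
  have hquad : PowerSeries.rescale (Fintype.card F : K)⁻¹
      (1 - PowerSeries.C (Fintype.card F : K) * PowerSeries.X ^ 2) =
        1 + PowerSeries.monomial 2 (-(Fintype.card F : K)⁻¹) := by
    rw [map_sub, map_one, rescale_C_mul_X_pow, sq, mul_inv_cancel_left₀ hq, map_neg,
      sub_eq_add_neg]
  have hpow (d : ℕ) : PowerSeries.rescale (Fintype.card F : K)⁻¹ (1 + PowerSeries.X ^ d) =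
      1 + PowerSeries.monomial d ((Fintype.card F : K)⁻¹ ^ d) := by
    have h := rescale_C_mul_X_pow (Fintype.card F : K)⁻¹ 1 d
    rw [map_one, one_mul, one_mul] at h
    rw [map_add, map_one, h]
  have h := congrArg (PowerSeries.rescale (Fintype.card F : K)⁻¹)
    (prod_mul_one_sub_sq_mul_degreeSeries hS hτ)
  rw [map_mul, map_prod, map_mul, map_pow, hlin, map_mul, hquad, map_prod] at h
  simpa only [hpow, map_add, map_one, rescale_C_mul_X_pow] using h

end EulerProduct

section LocalFactors

/-- The Euler factor `(1 + σ x Xᵈ) / (1 + x Xᵈ)`. -/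
def localFactor (σ x : ℝ) (d : ℕ) : PowerSeries ℂ :=
  (1 + PowerSeries.monomial d (σ * x : ℂ)) * (1 + PowerSeries.monomial d (x : ℂ))⁻¹

variable {σ x r u : ℝ} {d : ℕ}

lemma one_add_monomial_mul_inv (hd : d ≠ 0) (a : ℂ) :
    (1 + PowerSeries.monomial d a) * (1 + PowerSeries.monomial d a)⁻¹ = 1 := by
  refine PowerSeries.mul_inv_cancel _ ?_
  rw [map_add, ← PowerSeries.coeff_zero_eq_constantCoeff_apply,
    ← PowerSeries.coeff_zero_eq_constantCoeff_apply, PowerSeries.coeff_monomial, if_neg hd.symm]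
  simp

lemma one_add_monomial_mul_localFactor (hd : d ≠ 0) :
    (1 + PowerSeries.monomial d (x : ℂ)) * localFactor σ x d =
      1 + PowerSeries.monomial d (σ * x : ℂ) := by
  rw [localFactor, mul_left_comm, one_add_monomial_mul_inv hd, mul_one]

lemma inv_one_sub_le_exp (h0 : 0 ≤ u) (hu : u ≤ 3 / 4) : (1 - u)⁻¹ ≤ Real.exp (4 * u) := by
  rw [inv_le_iff_one_le_mul₀ (by linarith)]
  have h := Real.quadratic_le_exp_of_nonneg (by linarith : 0 ≤ 4 * u)
  nlinarith [mul_nonneg h0 (sub_nonneg.2 hu)]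

lemma l1Sum_localFactor_le (hd : d ≠ 0) (hr : 0 ≤ r) (hσ : |σ| ≤ 1) (hx : 0 ≤ x)
    (hxr : x * r ^ d ≤ 3 / 4) (n : ℕ) :
    l1Sum r n (localFactor σ x d) ≤ Real.exp (5 * (x * r ^ d)) := by
  have hu : 0 ≤ x * r ^ d := by positivity
  have hnum : l1Sum r n (1 + PowerSeries.monomial d (σ * x : ℂ)) ≤ Real.exp (x * r ^ d) := by
    refine (l1Sum_one_add_monomial_le hr d _).trans (le_trans ?_ (Real.add_one_le_exp _))
    rw [norm_mul, Complex.norm_real, Complex.norm_real, Real.norm_eq_abs, Real.norm_of_nonneg hx,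
      mul_assoc]
    linarith [mul_le_of_le_one_left hu hσ]
  have hden : l1Sum r n (1 + PowerSeries.monomial d (x : ℂ))⁻¹ ≤ Real.exp (4 * (x * r ^ d)) := by
    refine (l1Sum_le_of_one_add_mul_eq_one hr (by linarith) ?_
      (one_add_monomial_mul_inv hd _)).trans (inv_one_sub_le_exp hu hxr)
    simpa [abs_of_nonneg hx] using l1Sum_monomial_le (n := n) hr d (x : ℂ)
  refine (l1Sum_mul_le hr _ _).trans ?_
  rw [show 5 * (x * r ^ d) = x * r ^ d + 4 * (x * r ^ d) by ring, Real.exp_add]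
  exact mul_le_mul hnum hden (l1Sum_nonneg hr _) (Real.exp_nonneg _)

lemma seriesValue_localFactor (hd : d ≠ 0) (hr : 0 ≤ r) (hσ : |σ| ≤ 1) (hx : 0 ≤ x)
    (hxr : x * r ^ d ≤ 3 / 4) {v : ℂ} (hv : ‖v‖ ≤ r) :
    seriesValue (localFactor σ x d) v = (1 + σ * x * v ^ d) / (1 + x * v ^ d) := by
  have h := congrArg (seriesValue · v) (one_add_monomial_mul_localFactor (σ := σ) (x := x) hd)
  rw [seriesValue_mul (.one_add_monomial hr d _)
    (.of_l1Sum_le hr (l1Sum_localFactor_le hd hr hσ hx hxr)) hv, seriesValue_one_add_monomial,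
    seriesValue_one_add_monomial] at h
  refine eq_div_of_mul_eq (fun h0 ↦ ?_) (by rw [mul_comm, h])
  have hnorm : ‖(x * v ^ d : ℂ)‖ ≤ 3 / 4 := by
    rw [norm_mul, norm_pow, Complex.norm_real, Real.norm_of_nonneg hx]
    exact le_trans (by gcongr) hxr
  rw [eq_neg_of_add_eq_zero_right h0, norm_neg, norm_one] at hnorm
  linarith

lemma half_le_one_add_mul (hσ : |σ| ≤ 1) (hx0 : 0 ≤ x) (hx : x ≤ 1 / 2) : 1 / 2 ≤ 1 + σ * x := by
  nlinarith [neg_le_of_abs_le hσ]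

lemma exp_neg_le_div_one_add (hσ : |σ| ≤ 1) (hx0 : 0 ≤ x) (hx : x ≤ 1 / 2) :
    Real.exp (-(5 * x)) ≤ (1 + σ * x) / (1 + x) := by
  have hnum : Real.exp (-(4 * x)) ≤ 1 + σ * x := by
    rw [Real.exp_neg, inv_le_comm₀ (Real.exp_pos _) (by linarith [half_le_one_add_mul hσ hx0 hx])]
    refine le_trans ?_ (inv_one_sub_le_exp hx0 (by linarith))
    exact inv_anti₀ (by linarith) (by nlinarith [neg_le_of_abs_le hσ])
  rw [le_div_iff₀ (by linarith)]
  calc Real.exp (-(5 * x)) * (1 + x)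
      ≤ Real.exp (-(5 * x)) * Real.exp x := by
        gcongr
        linarith [Real.add_one_le_exp x]
    _ = Real.exp (-(4 * x)) := by
        rw [← Real.exp_add]
        ring_nf
    _ ≤ 1 + σ * x := hnum

lemma norm_one_add_mul_le {a : ℝ} (ha : 1 / 2 ≤ 1 + a) {w : ℂ} {δ : ℝ}
    (hw : ‖a * (w - 1)‖ ≤ δ) : ‖1 + a * w‖ ≤ (1 + a) * Real.exp (2 * δ) := by
  have hδ : 0 ≤ δ := (norm_nonneg _).trans hw
  have h := norm_add_le ((1 + a : ℝ) : ℂ) (a * (w - 1))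
  rw [Complex.norm_real, Real.norm_of_nonneg (by linarith)] at h
  calc ‖1 + a * w‖ = ‖((1 + a : ℝ) : ℂ) + a * (w - 1)‖ := by
        congr 1
        push_cast
        ring
    _ ≤ (1 + a) * (2 * δ + 1) := by nlinarith
    _ ≤ (1 + a) * Real.exp (2 * δ) := by
        gcongr
        exact Real.add_one_le_exp _

lemma mul_one_sub_le_norm_one_add_mul {a : ℝ} (ha : 0 ≤ a) {w : ℂ} {δ : ℝ}
    (hw : ‖a * (w - 1)‖ ≤ δ) : (1 + a) * (1 - δ) ≤ ‖1 + a * w‖ := by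
  have h := norm_sub_le_norm_add ((1 + a : ℝ) : ℂ) (a * (w - 1))
  rw [Complex.norm_real, Real.norm_of_nonneg (by linarith)] at h
  rw [show 1 + a * w = ((1 + a : ℝ) : ℂ) + a * (w - 1) by push_cast; ring]
  nlinarith [(norm_nonneg _).trans hw]

lemma norm_one_add_div_one_add_le (hσ : |σ| ≤ 1) (hx0 : 0 ≤ x) (hx : x ≤ 1 / 2) {w : ℂ} {ε : ℝ}
    (hw : ‖w - 1‖ ≤ ε) (hε : x * ε ≤ 3 / 4) :
    ‖(1 + σ * x * w) / (1 + x * w)‖ ≤ (1 + σ * x) / (1 + x) * Real.exp (6 * (x * ε)) := by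
  have hε0 : 0 ≤ x * ε := mul_nonneg hx0 ((norm_nonneg _).trans hw)
  have hpert (a : ℝ) (ha : |a| ≤ x) : ‖(a * (w - 1) : ℂ)‖ ≤ x * ε := by
    rw [norm_mul, Complex.norm_real, Real.norm_eq_abs]
    exact mul_le_mul ha hw (norm_nonneg _) hx0
  have hσx := half_le_one_add_mul hσ hx0 hx
  have habs : |σ * x| ≤ x := by
    rw [abs_mul, abs_of_nonneg hx0]
    exact mul_le_of_le_one_left hx0 hσ
  have hnum := norm_one_add_mul_le hσx (hpert _ habs)
  have hden := mul_one_sub_le_norm_one_add_mul hx0 (hpert x (abs_of_nonneg hx0).le)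
  have hpos : 0 < (1 + x) * (1 - x * ε) := mul_pos (by linarith) (by linarith)
  rw [Complex.ofReal_mul] at hnum
  rw [norm_div]
  calc ‖(1 + σ * x * w : ℂ)‖ / ‖(1 + x * w : ℂ)‖
      ≤ (1 + σ * x) * Real.exp (2 * (x * ε)) / ((1 + x) * (1 - x * ε)) := by gcongr
    _ = (1 + σ * x) / (1 + x) * (Real.exp (2 * (x * ε)) * (1 - x * ε)⁻¹) := by field_simp
    _ ≤ (1 + σ * x) / (1 + x) * (Real.exp (2 * (x * ε)) * Real.exp (4 * (x * ε))) := by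
        refine mul_le_mul_of_nonneg_left ?_ (div_nonneg (by linarith) (by linarith))
        exact mul_le_mul_of_nonneg_left (inv_one_sub_le_exp hε0 hε) (Real.exp_nonneg _)
    _ = (1 + σ * x) / (1 + x) * Real.exp (6 * (x * ε)) := by
        rw [← Real.exp_add]
        ring_nf

lemma norm_pow_sub_one_le {v : ℂ} {ρ : ℝ} (hv : ‖v - 1‖ ≤ ρ) (d : ℕ) :
    ‖v ^ d - 1‖ ≤ Real.exp (d * ρ) - 1 := by
  have h := (Finset.range d).norm_prod_one_add_sub_one_le fun _ ↦ v - 1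
  rw [Finset.prod_const, Finset.sum_const, Finset.card_range, add_sub_cancel, nsmul_eq_mul] at h
  exact h.trans (by gcongr)

end LocalFactors

section PrimeSums

variable {F : Type} [Field F] [Fintype F] {S : Finset (Polynomial F)}

lemma inv_card_le_half : (Fintype.card F : ℝ)⁻¹ ≤ 1 / 2 := by
  have h : (2 : ℝ) ≤ Fintype.card F := by exact_mod_cast Fintype.one_lt_card (α := F)
  rw [one_div]
  exact inv_anti₀ two_pos h

lemma sum_natDegree_mul_inv_card_pow_le (hS : ∀ P ∈ S, IsMonicPrime P) (Y : ℕ) :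
    ∑ P ∈ S with P.natDegree ≤ Y, P.natDegree * (Fintype.card F : ℝ)⁻¹ ^ P.natDegree ≤ Y := by
  rw [← Finset.sum_fiberwise_of_maps_to (t := Finset.Icc 1 Y) (g := Polynomial.natDegree)
    fun P hP ↦ Finset.mem_Icc.2
      ⟨(hS P (Finset.mem_filter.1 hP).1).2.natDegree_pos, (Finset.mem_filter.1 hP).2⟩]
  have hfiber : ∀ e ∈ Finset.Icc 1 Y, ∑ P ∈ S.filter (fun P ↦ P.natDegree ≤ Y) with
      P.natDegree = e, P.natDegree * (Fintype.card F : ℝ)⁻¹ ^ P.natDegree ≤ 1 := by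
    intro e _
    have hS' : ∀ P ∈ S.filter (fun P ↦ P.natDegree ≤ Y), IsMonicPrime P := fun P hP ↦
      hS P (Finset.mem_filter.1 hP).1
    have hcard : (e * ((S.filter (fun P ↦ P.natDegree ≤ Y)).filter
        fun P ↦ P.natDegree = e).card : ℝ) ≤ (Fintype.card F : ℝ) ^ e := by
      exact_mod_cast mul_card_filter_natDegree_le hS' e
    rw [Finset.sum_congr rfl fun P hP ↦ by rw [(Finset.mem_filter.1 hP).2], Finset.sum_const,
      nsmul_eq_mul, inv_pow, ← mul_assoc, ← div_eq_mul_inv, div_le_one (by positivity)]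
    linarith
  simpa using Finset.sum_le_card_nsmul _ _ 1 hfiber

lemma inv_card_pow_mul_exp_le {Y : ℝ} (hY : 4 ≤ Y) (d : ℕ) :
    (Fintype.card F : ℝ)⁻¹ ^ d * Real.exp (d * Y⁻¹) ≤ (2 / 3) ^ d := by
  have hexp : Real.exp Y⁻¹ ≤ 4 / 3 := by
    have hY' : Y⁻¹ ≤ 1 / 4 := by
      rw [one_div]
      exact inv_anti₀ (by norm_num) hY
    have h := Real.exp_bound_div_one_sub_of_interval (inv_nonneg.2 (by linarith : 0 ≤ Y))
      (by linarith)
    refine h.trans ?_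
    rw [div_le_iff₀ (by linarith)]
    linarith
  rw [Real.exp_nat_mul, ← mul_pow]
  refine pow_le_pow_left₀ (by positivity) ?_ d
  nlinarith [inv_card_le_half (F := F), Real.exp_pos Y⁻¹]

lemma sum_natDegree_le_inv_card_pow_mul_exp_sub_one_le (hS : ∀ P ∈ S, IsMonicPrime P) {Y : ℕ}
    (hY : Y ≠ 0) :
    ∑ P ∈ S with P.natDegree ≤ Y,
      (Fintype.card F : ℝ)⁻¹ ^ P.natDegree * (Real.exp (P.natDegree * (Y : ℝ)⁻¹) - 1) ≤ 2 := by
  have hY0 : (0 : ℝ) < Y := by exact_mod_cast Nat.pos_of_ne_zero hY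
  have hterm : ∀ P ∈ S.filter fun P ↦ P.natDegree ≤ Y,
      (Fintype.card F : ℝ)⁻¹ ^ P.natDegree * (Real.exp (P.natDegree * (Y : ℝ)⁻¹) - 1) ≤
        2 * (Y : ℝ)⁻¹ * (P.natDegree * (Fintype.card F : ℝ)⁻¹ ^ P.natDegree) := by
    intro P hP
    have hd : (P.natDegree : ℝ) ≤ Y := by exact_mod_cast (Finset.mem_filter.1 hP).2
    have h1 : |(P.natDegree * (Y : ℝ)⁻¹ : ℝ)| ≤ 1 := by
      rw [abs_of_nonneg (by positivity), ← div_eq_mul_inv]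
      exact div_le_one_of_le₀ hd hY0.le
    have h2 := (le_abs_self _).trans (Real.abs_exp_sub_one_le h1)
    rw [abs_of_nonneg (by positivity)] at h2
    nlinarith [pow_nonneg (inv_nonneg.2 (Nat.cast_nonneg (α := ℝ) (Fintype.card F))) P.natDegree]
  refine (Finset.sum_le_sum hterm).trans ?_
  calc _ ≤ 2 * (Y : ℝ)⁻¹ * Y := by
        rw [← Finset.mul_sum]
        gcongr
        exact sum_natDegree_mul_inv_card_pow_le hS Y
    _ = 2 := by rw [mul_assoc, inv_mul_cancel₀ hY0.ne', mul_one]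

lemma inv_card_pow_mul_exp_sub_one_le {Y : ℝ} (hY : 4 ≤ Y) (d : ℕ) :
    (Fintype.card F : ℝ)⁻¹ ^ d * (Real.exp (d * Y⁻¹) - 1) ≤ (2 / 3) ^ d := by
  refine le_trans ?_ (inv_card_pow_mul_exp_le (F := F) hY d)
  gcongr
  linarith

-- Degrees up to `Y` are controlled by the prime counts, larger ones by the size of `S`.
lemma sum_inv_card_pow_mul_exp_sub_one_le (hS : ∀ P ∈ S, IsMonicPrime P) {Y : ℕ} (hY : 4 ≤ Y) :
    ∑ P ∈ S, (Fintype.card F : ℝ)⁻¹ ^ P.natDegree * (Real.exp (P.natDegree * (Y : ℝ)⁻¹) - 1) ≤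
      2 + S.card * (2 / 3) ^ Y := by
  have hY4 : (4 : ℝ) ≤ Y := by exact_mod_cast hY
  rw [← Finset.sum_filter_add_sum_filter_not S fun P ↦ P.natDegree ≤ Y]
  refine add_le_add (sum_natDegree_le_inv_card_pow_mul_exp_sub_one_le hS (by omega)) ?_
  refine (Finset.sum_le_card_nsmul _ _ ((2 / 3 : ℝ) ^ Y) fun P hP ↦ ?_).trans ?_
  · exact (inv_card_pow_mul_exp_sub_one_le hY4 _).trans (pow_le_pow_of_le_one (by norm_num)
      (by norm_num) (not_le.1 (Finset.mem_filter.1 hP).2).le)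
  · rw [nsmul_eq_mul]
    gcongr
    exact Finset.filter_subset _ _

lemma exists_sum_pow_natDegree_le (F : Type) [Field F] [Finite F] {θ η : ℝ} (hθ0 : 0 ≤ θ)
    (hθ : θ < 1) (hη : 0 < η) :
    ∃ A : ℝ, ∀ S : Finset (Polynomial F), (∀ P ∈ S, IsMonicPrime P) →
      ∑ P ∈ S, θ ^ P.natDegree ≤ A + η * ∑ P ∈ S, (P.natDegree : ℝ) := by
  obtain ⟨m, hm⟩ := exists_pow_lt_of_lt_one hη hθ
  refine ⟨(primesLE F m).card, fun S hS ↦ ?_⟩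
  have hterm : ∀ P ∈ S, θ ^ P.natDegree ≤ (if P.natDegree ≤ m then 1 else 0) +
      η * P.natDegree := by
    intro P hP
    have hd : (1 : ℝ) ≤ P.natDegree := by exact_mod_cast (hS P hP).2.natDegree_pos
    split_ifs with hPm
    · nlinarith [pow_le_one₀ (n := P.natDegree) hθ0 hθ.le]
    · nlinarith [pow_le_pow_of_le_one hθ0 hθ.le (not_le.1 hPm).le]
  refine (Finset.sum_le_sum hterm).trans ?_
  rw [Finset.sum_add_distrib, ← Finset.mul_sum, Finset.sum_boole]
  gcongr
  exact fun P hP ↦ mem_primesLE.2 ⟨hS P (Finset.mem_filter.1 hP).1, (Finset.mem_filter.1 hP).2⟩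

end PrimeSums

section EulerProducts

variable {F : Type} [Field F] [Fintype F] {S : Finset (Polynomial F)} {τ : Polynomial F → ℝ}
  {P : Polynomial F}

/-- The series `(1 - X²/q) ∏ (1 + (τ_P - 1) x_P Xᵈ) / (1 + x_P Xᵈ)`, with `d = deg P` and
`x_P = q⁻ᵈ`, which remains of the Dirichlet series of `primeWeight τ` once its double pole is
removed, when `τ = 2` outside `S`. -/
def eulerNumerator (τ : Polynomial F → ℝ) (S : Finset (Polynomial F)) : PowerSeries ℂ :=
  (1 + PowerSeries.monomial 2 (-(Fintype.card F : ℂ)⁻¹)) *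
    ∏ P ∈ S, localFactor (τ P - 1) ((Fintype.card F : ℝ)⁻¹ ^ P.natDegree) P.natDegree

/-- The value of `eulerNumerator τ S` at `1`. -/
def eulerConstant (τ : Polynomial F → ℝ) (S : Finset (Polynomial F)) : ℝ :=
  (1 - (Fintype.card F : ℝ)⁻¹) *
    ∏ P ∈ S, (1 + (τ P - 1) * (Fintype.card F : ℝ)⁻¹ ^ P.natDegree) /
      (1 + (Fintype.card F : ℝ)⁻¹ ^ P.natDegree)

lemma one_sub_X_sq_mul_rescale_eq_eulerNumerator (hS : ∀ P ∈ S, IsMonicPrime P)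
    (hτ : ∀ P ∉ S, τ P = 2) :
    (1 - PowerSeries.X) ^ 2 * PowerSeries.rescale (Fintype.card F : ℂ)⁻¹
      (degreeSeries (primeWeight fun P ↦ (τ P : ℂ))) = eulerNumerator τ S := by
  have hd : ∀ P ∈ S, P.natDegree ≠ 0 := fun P hP ↦ (hS P hP).2.natDegree_pos.ne'
  have hunit : IsUnit (∏ P ∈ S, (1 + PowerSeries.monomial P.natDegree
      ((Fintype.card F : ℂ)⁻¹ ^ P.natDegree))) :=
    IsUnit.prod_iff.2 fun P hP ↦ .of_mul_eq_one _ (one_add_monomial_mul_inv (hd P hP) _)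
  refine hunit.mul_left_cancel ?_
  rw [prod_mul_one_sub_X_sq_mul_rescale (Nat.cast_ne_zero.2 Fintype.card_ne_zero) hS
    fun P hP ↦ by rw [hτ P hP, Complex.ofReal_ofNat], eulerNumerator, mul_left_comm,
    ← Finset.prod_mul_distrib]
  congr 1
  refine Finset.prod_congr rfl fun P hP ↦ ?_
  simpa using (one_add_monomial_mul_localFactor (σ := τ P - 1)
    (x := (Fintype.card F : ℝ)⁻¹ ^ P.natDegree) (hd P hP)).symm

lemma IsMonicPrime.inv_card_pow_le_half (hP : IsMonicPrime P) :
    (Fintype.card F : ℝ)⁻¹ ^ P.natDegree ≤ 1 / 2 :=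
  (pow_le_of_le_one (by positivity) (inv_card_le_half.trans (by norm_num))
    hP.2.natDegree_pos.ne').trans inv_card_le_half

lemma inv_card_pow_mul_pow_le (d : ℕ) :
    (Fintype.card F : ℝ)⁻¹ ^ d * (3 / 2) ^ d ≤ (3 / 4) ^ d := by
  rw [← mul_pow]
  exact pow_le_pow_left₀ (by positivity) (by linarith [inv_card_le_half (F := F)]) d

lemma IsMonicPrime.inv_card_pow_mul_pow_le (hP : IsMonicPrime P) :
    (Fintype.card F : ℝ)⁻¹ ^ P.natDegree * (3 / 2) ^ P.natDegree ≤ 3 / 4 :=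
  (FFEH.inv_card_pow_mul_pow_le _).trans
    (pow_le_of_le_one (by norm_num) (by norm_num) hP.2.natDegree_pos.ne')

variable (hS : ∀ P ∈ S, IsMonicPrime P) (hτ : ∀ P ∈ S, |τ P - 1| ≤ 1)
include hS hτ

lemma l1Sum_localFactor_prime_le (hP : P ∈ S) (n : ℕ) :
    l1Sum (3 / 2) n
        (localFactor (τ P - 1) ((Fintype.card F : ℝ)⁻¹ ^ P.natDegree) P.natDegree) ≤
      Real.exp (5 * (3 / 4) ^ P.natDegree) := by
  refine (l1Sum_localFactor_le (hS P hP).2.natDegree_pos.ne' (by norm_num) (hτ P hP)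
    (by positivity) (hS P hP).inv_card_pow_mul_pow_le n).trans ?_
  gcongr
  exact inv_card_pow_mul_pow_le _

lemma l1Sum_eulerNumerator_le (n : ℕ) :
    l1Sum (3 / 2) n (eulerNumerator τ S) ≤
      3 * Real.exp (5 * ∑ P ∈ S, (3 / 4 : ℝ) ^ P.natDegree) := by
  have hr : (0 : ℝ) ≤ 3 / 2 := by norm_num
  refine (l1Sum_mul_le hr _ _).trans (mul_le_mul ?_ ?_ (l1Sum_nonneg hr _) (by norm_num))
  · refine (l1Sum_one_add_monomial_le hr _ _).trans ?_
    rw [norm_neg, norm_inv, Complex.norm_natCast]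
    linarith [inv_card_le_half (F := F)]
  · rw [Finset.mul_sum, Real.exp_sum]
    exact (l1Sum_prod_le hr _ _).trans (Finset.prod_le_prod (fun _ _ ↦ l1Sum_nonneg hr _)
      fun P hP ↦ l1Sum_localFactor_prime_le hS hτ hP n)

lemma seriesValue_eulerNumerator {v : ℂ} (hv : ‖v‖ ≤ 3 / 2) :
    seriesValue (eulerNumerator τ S) v = (1 - (Fintype.card F : ℂ)⁻¹ * v ^ 2) *
      ∏ P ∈ S, (1 + (τ P - 1 : ℝ) * ((Fintype.card F : ℝ)⁻¹ ^ P.natDegree : ℝ) * v ^ P.natDegree) /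
        (1 + ((Fintype.card F : ℝ)⁻¹ ^ P.natDegree : ℝ) * v ^ P.natDegree) := by
  have hr : (0 : ℝ) ≤ 3 / 2 := by norm_num
  have hfactor : ∀ P ∈ S, AbsSummable (3 / 2)
      (localFactor (τ P - 1) ((Fintype.card F : ℝ)⁻¹ ^ P.natDegree) P.natDegree) := fun P hP ↦
    .of_l1Sum_le hr (l1Sum_localFactor_prime_le hS hτ hP)
  rw [eulerNumerator, seriesValue_mul (.one_add_monomial hr _ _) (.prod hr hfactor) hv,
    seriesValue_one_add_monomial, seriesValue_prod hr hfactor hv, neg_mul, ← sub_eq_add_neg]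
  congr 1
  exact Finset.prod_congr rfl fun P hP ↦ seriesValue_localFactor (hS P hP).2.natDegree_pos.ne' hr
    (hτ P hP) (by positivity) (hS P hP).inv_card_pow_mul_pow_le hv

lemma seriesValue_eulerNumerator_one :
    seriesValue (eulerNumerator τ S) 1 = (eulerConstant τ S : ℂ) := by
  rw [seriesValue_eulerNumerator hS hτ (by norm_num), eulerConstant]
  push_cast
  simp

lemma half_mul_exp_neg_le_eulerConstant :
    1 / 2 * Real.exp (-(5 * ∑ P ∈ S, (3 / 4 : ℝ) ^ P.natDegree)) ≤ eulerConstant τ S := by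
  have hq := inv_card_le_half (F := F)
  rw [Finset.mul_sum, ← Finset.sum_neg_distrib, Real.exp_sum]
  refine mul_le_mul (by linarith) (Finset.prod_le_prod (fun _ _ ↦ (Real.exp_pos _).le)
    fun P hP ↦ ?_) (Finset.prod_nonneg fun _ _ ↦ (Real.exp_pos _).le) (by linarith)
  refine le_trans ?_ (exp_neg_le_div_one_add (hτ P hP) (by positivity)
    (hS P hP).inv_card_pow_le_half)
  gcongr
  linarith

lemma eulerConstant_pos : 0 < eulerConstant τ S :=
  (by positivity : 0 < 1 / 2 * Real.exp (-(5 * ∑ P ∈ S, (3 / 4 : ℝ) ^ P.natDegree))).trans_le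
    (half_mul_exp_neg_le_eulerConstant hS hτ)

lemma norm_seriesValue_eulerNumerator_le {Y : ℕ} (hY : 4 ≤ Y) :
    ∀ v ∈ Metric.sphere (1 : ℂ) (Y : ℝ)⁻¹, ‖seriesValue (eulerNumerator τ S) v‖ ≤
      4 * eulerConstant τ S * Real.exp (6 * (2 + S.card * (2 / 3) ^ Y)) := by
  intro v hv
  have hY4 : (4 : ℝ) ≤ Y := by exact_mod_cast hY
  have hq := inv_card_le_half (F := F)
  have hv1 : ‖v - 1‖ ≤ (Y : ℝ)⁻¹ := (mem_sphere_iff_norm.1 hv).le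
  have hv54 : ‖v‖ ≤ 5 / 4 := by
    have hY' : (Y : ℝ)⁻¹ ≤ 4⁻¹ := inv_anti₀ (by norm_num) hY4
    have h := norm_le_norm_add_norm_sub' v 1
    rw [norm_one] at h
    linarith
  have hquad : ‖1 - (Fintype.card F : ℂ)⁻¹ * v ^ 2‖ ≤ 4 * (1 - (Fintype.card F : ℝ)⁻¹) := by
    refine (norm_sub_le _ _).trans ?_
    rw [norm_one, norm_mul, norm_inv, norm_pow, Complex.norm_natCast]
    have hv2 : ‖v‖ ^ 2 ≤ (5 / 4) ^ 2 := by gcongr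
    nlinarith [inv_nonneg.2 (Nat.cast_nonneg (α := ℝ) (Fintype.card F))]
  rw [seriesValue_eulerNumerator hS hτ (hv54.trans (by norm_num)), norm_mul, norm_prod,
    eulerConstant, ← mul_assoc 4, mul_assoc (4 * _)]
  refine mul_le_mul hquad ?_ (Finset.prod_nonneg fun _ _ ↦ norm_nonneg _) (by linarith)
  have hε : ∀ P ∈ S, (Fintype.card F : ℝ)⁻¹ ^ P.natDegree *
      (Real.exp (P.natDegree * (Y : ℝ)⁻¹) - 1) ≤ 3 / 4 := fun P hP ↦
    calc (Fintype.card F : ℝ)⁻¹ ^ P.natDegree * (Real.exp (P.natDegree * (Y : ℝ)⁻¹) - 1)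
        ≤ (2 / 3) ^ P.natDegree := inv_card_pow_mul_exp_sub_one_le hY4 _
      _ ≤ 2 / 3 := pow_le_of_le_one (by norm_num) (by norm_num) (hS P hP).2.natDegree_pos.ne'
      _ ≤ 3 / 4 := by norm_num
  refine (Finset.prod_le_prod (fun _ _ ↦ norm_nonneg _) fun P hP ↦
    norm_one_add_div_one_add_le (hτ P hP) (by positivity) (hS P hP).inv_card_pow_le_half
      (norm_pow_sub_one_le hv1 _) (hε P hP)).trans ?_
  rw [Finset.prod_mul_distrib, ← Real.exp_sum, ← Finset.mul_sum]
  refine mul_le_mul_of_nonneg_left ?_ (Finset.prod_nonneg fun P hP ↦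
    (Real.exp_nonneg _).trans (exp_neg_le_div_one_add (hτ P hP) (by positivity)
      (hS P hP).inv_card_pow_le_half))
  gcongr
  exact sum_inv_card_pow_mul_exp_sub_one_le hS hY

omit hτ [Fintype F] in
-- The scale `Y = 2 (log₂ D + 1)` makes the contribution of large primes `O(#S / D)`.
lemma card_mul_pow_log_le {D : ℕ} (hSD : ∑ P ∈ S, P.natDegree ≤ 2 * D) :
    S.card * (2 / 3 : ℝ) ^ (2 * (Nat.log 2 D + 1)) ≤ 2 := by
  have hcard : (S.card : ℝ) ≤ 2 * D := by
    have h := Finset.card_nsmul_le_sum S Polynomial.natDegree 1 fun P hP ↦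
      (hS P hP).2.natDegree_pos
    rw [smul_eq_mul, mul_one] at h
    exact_mod_cast h.trans hSD
  have hD : (D : ℝ) ≤ 2 ^ (Nat.log 2 D + 1) := by
    exact_mod_cast (Nat.lt_pow_succ_log_self one_lt_two D).le
  calc S.card * (2 / 3 : ℝ) ^ (2 * (Nat.log 2 D + 1))
      = S.card * (4 / 9) ^ (Nat.log 2 D + 1) := by
        rw [pow_mul]
        norm_num
    _ ≤ 2 * 2 ^ (Nat.log 2 D + 1) * (1 / 2) ^ (Nat.log 2 D + 1) :=
        mul_le_mul (hcard.trans (by gcongr)) (pow_le_pow_left₀ (by norm_num) (by norm_num) _)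
          (by positivity) (by positivity)
    _ = 2 := by
        rw [mul_assoc, ← mul_pow]
        norm_num

lemma poleAtOne_eulerNumerator (hτ' : ∀ P ∉ S, τ P = 2) {D : ℕ} (hD : 2 ≤ D)
    (hSD : ∑ P ∈ S, P.natDegree ≤ 2 * D) :
    PoleAtOne 2 (3 / 2) (3 * Real.exp (5 * ∑ P ∈ S, (3 / 4 : ℝ) ^ P.natDegree))
      ((2 * (Nat.log 2 D + 1) : ℕ) : ℝ) (4 * eulerConstant τ S * Real.exp 24) (eulerNumerator τ S)
      (PowerSeries.rescale (Fintype.card F : ℂ)⁻¹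
        (degreeSeries (primeWeight fun P ↦ (τ P : ℂ)))) := by
  have hY : 4 ≤ 2 * (Nat.log 2 D + 1) := by
    have := Nat.log_pos one_lt_two hD
    omega
  have hY4 : (4 : ℝ) ≤ (2 * (Nat.log 2 D + 1) : ℕ) := by exact_mod_cast hY
  refine ⟨one_sub_X_sq_mul_rescale_eq_eulerNumerator hS hτ', by linarith, ?_,
    l1Sum_eulerNumerator_le hS hτ, fun v hv ↦
      (norm_seriesValue_eulerNumerator_le hS hτ hY v hv).trans ?_⟩
  · linarith [inv_anti₀ (by norm_num) hY4]
  · have := eulerConstant_pos hS hτ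
    gcongr
    linarith [card_mul_pow_log_le hS hSD]

omit hS hτ

lemma exists_l1_bound_le_mul_eulerConstant (F : Type) [Field F] [Fintype F] (c : ℕ) :
    ∃ A : ℝ, 0 < A ∧ ∀ {S : Finset (Polynomial F)} {τ : Polynomial F → ℝ} {z : ℕ},
      (∀ P ∈ S, IsMonicPrime P) → (∀ P ∈ S, |τ P - 1| ≤ 1) →
      ∑ P ∈ S, P.natDegree ≤ 2 * (c * z) →
      3 * Real.exp (5 * ∑ P ∈ S, (3 / 4 : ℝ) ^ P.natDegree) / (3 / 2) ^ z ≤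
        A * eulerConstant τ S := by
  have : 0 < Real.log (3 / 2) := Real.log_pos (by norm_num)
  obtain ⟨A, hA⟩ := exists_sum_pow_natDegree_le F (θ := 3 / 4)
    (η := Real.log (3 / 2) / (20 * (c + 1))) (by norm_num) (by norm_num) (by positivity)
  refine ⟨6 * Real.exp (10 * A), by positivity, fun {S τ z} hS hτ hSz ↦ ?_⟩
  have hA := hA S hS
  have hκ := half_mul_exp_neg_le_eulerConstant hS hτ
  set T := ∑ P ∈ S, (3 / 4 : ℝ) ^ P.natDegree
  have hT : 10 * T ≤ 10 * A + z * Real.log (3 / 2) := by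
    have hsum : ∑ P ∈ S, (P.natDegree : ℝ) ≤ 2 * ((c + 1) * z) := by
      have h : (∑ P ∈ S, (P.natDegree : ℝ)) ≤ 2 * (c * z) := by exact_mod_cast hSz
      linarith [Nat.cast_nonneg (α := ℝ) z]
    have hη : Real.log (3 / 2) / (20 * (c + 1)) * ∑ P ∈ S, (P.natDegree : ℝ) ≤
        Real.log (3 / 2) / (20 * (c + 1)) * (2 * ((c + 1) * z)) := by gcongr
    have hcancel : Real.log (3 / 2) / (20 * (c + 1)) * (2 * ((c + 1) * z)) =
        z * Real.log (3 / 2) / 10 := by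
      field_simp
      ring
    linarith
  rw [div_le_iff₀ (by positivity)]
  calc 3 * Real.exp (5 * T)
      = 6 * Real.exp (10 * T) * (1 / 2 * Real.exp (-(5 * T))) := by
        rw [show 5 * T = 10 * T + -(5 * T) by ring, Real.exp_add]
        ring_nf
    _ ≤ 6 * Real.exp (10 * A + z * Real.log (3 / 2)) * eulerConstant τ S := by gcongr
    _ = 6 * Real.exp (10 * A) * eulerConstant τ S * (3 / 2) ^ z := by
        rw [Real.exp_add, Real.exp_nat_mul, Real.exp_log (by norm_num)]
        ring

lemma two_mul_log_add_one_le {D : ℕ} (hD : 2 ≤ D) :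
    ((2 * (Nat.log 2 D + 1) : ℕ) : ℝ) ≤ 6 * Real.log D := by
  have hlog : (1 : ℝ) ≤ Nat.log 2 D := by exact_mod_cast Nat.log_pos one_lt_two hD
  have h := Real.natLog_le_logb D 2
  have h2 := Real.log_two_gt_d9
  rw [Nat.cast_ofNat, Real.logb, le_div_iff₀ (by linarith)] at h
  push_cast
  nlinarith

lemma ofReal_sum_primeWeight_mul_pow (τ : Polynomial F → ℝ) (k z : ℕ) :
    ((∑ n ∈ Finset.range (z + 1), (Fintype.card F : ℝ)⁻¹ ^ n *
        (∑ N ∈ monics F n, primeWeight τ N) * ((z - n : ℕ) : ℝ) ^ k : ℝ) : ℂ) =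
      ∑ n ∈ Finset.range (z + 1), PowerSeries.coeff n
        (PowerSeries.rescale (Fintype.card F : ℂ)⁻¹
          (degreeSeries (primeWeight fun P ↦ (τ P : ℂ)))) * ((z - n : ℕ) : ℂ) ^ k := by
  simp only [PowerSeries.coeff_rescale, degreeSeries, PowerSeries.coeff_mk, primeWeight]
  push_cast
  rfl

theorem exists_abs_sum_primeWeight_mul_pow_sub_le (F : Type) [Field F] [Fintype F] (k c : ℕ) :
    ∃ C : ℝ, 0 < C ∧ ∀ {S : Finset (Polynomial F)} {τ : Polynomial F → ℝ} {D z : ℕ},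
      (∀ P ∈ S, IsMonicPrime P) → (∀ P ∈ S, |τ P - 1| ≤ 1) → (∀ P ∉ S, τ P = 2) → 2 ≤ D →
      ∑ P ∈ S, P.natDegree ≤ 2 * D → D ≤ c * z →
      |∑ n ∈ Finset.range (z + 1), (Fintype.card F : ℝ)⁻¹ ^ n *
          (∑ N ∈ monics F n, primeWeight τ N) * ((z - n : ℕ) : ℝ) ^ k -
        eulerConstant τ S * (k.factorial / (k + 2).factorial * (z : ℝ) ^ (k + 2))| ≤
      C * eulerConstant τ S * (z : ℝ) ^ (k + 1) * Real.log D := by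
  obtain ⟨A, hA0, hA⟩ := exists_l1_bound_le_mul_eulerConstant F c
  obtain ⟨C, hC⟩ := exists_norm_sum_coeff_mul_pow_sub_le k 2 (3 / 2) (2 * c)
  refine ⟨|C| * (24 * Real.exp 24 + 2 * A) + 1, by positivity,
    fun {S τ D z} hS hτ hτ' hD hSD hDz ↦ ?_⟩
  have hz : 1 ≤ z := Nat.pos_of_ne_zero fun h ↦ by simp [h] at hDz; omega
  have hYz : ((2 * (Nat.log 2 D + 1) : ℕ) : ℝ) ≤ 2 * c * z := by
    have hlog : Nat.log 2 D < D := Nat.log_lt_self 2 (by omega)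
    have h : 2 * (Nat.log 2 D + 1) ≤ 2 * (c * z) := by omega
    rw [mul_assoc]
    exact_mod_cast h
  have hpole := hC (poleAtOne_eulerNumerator hS hτ hτ' hD hSD) hz hYz
  have hN := hA hS hτ (hSD.trans (Nat.mul_le_mul_left 2 hDz))
  have hκ := eulerConstant_pos hS hτ
  have hY := two_mul_log_add_one_le hD
  rw [← ofReal_sum_primeWeight_mul_pow, seriesValue_eulerNumerator_one hS hτ] at hpole
  set κ := eulerConstant τ S
  have hlogD : 1 ≤ 2 * Real.log D := by
    have h : Real.log 2 ≤ Real.log D := Real.log_le_log two_pos (by exact_mod_cast hD)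
    linarith [Real.log_two_gt_d9]
  have hz1 : 1 ≤ (z : ℝ) ^ (k + 1) := one_le_pow₀ (by exact_mod_cast hz)
  have hzlog : 1 ≤ (z : ℝ) ^ (k + 1) * (2 * Real.log D) := one_le_mul_of_one_le_of_one_le hz1 hlogD
  have hzlog0 : 0 ≤ κ * ((z : ℝ) ^ (k + 1) * Real.log D) := mul_nonneg hκ.le (by linarith)
  rw [← Real.norm_eq_abs, ← Complex.norm_real]
  push_cast at hpole ⊢
  refine hpole.trans ((mul_le_mul_of_nonneg_right (le_abs_self C) ?_).trans ?_)
  · positivity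
  calc |C| * (4 * κ * Real.exp 24 * (z : ℝ) ^ (k + 1) * (2 * (Nat.log 2 D + 1)) +
        3 * Real.exp (5 * ∑ P ∈ S, (3 / 4 : ℝ) ^ P.natDegree) / (3 / 2) ^ z)
      ≤ |C| * (4 * κ * Real.exp 24 * (z : ℝ) ^ (k + 1) * (6 * Real.log D) +
          A * κ * ((z : ℝ) ^ (k + 1) * (2 * Real.log D))) := by
        push_cast at hY
        gcongr
        exact hN.trans (le_mul_of_one_le_right (by positivity) hzlog)
    _ = |C| * (24 * Real.exp 24 + 2 * A) * (κ * ((z : ℝ) ^ (k + 1) * Real.log D)) := by ring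
    _ ≤ (|C| * (24 * Real.exp 24 + 2 * A) + 1) * κ * (z : ℝ) ^ (k + 1) * Real.log D := by
        linarith

end EulerProducts

section TwoOmegaWeight

variable {F : Type} [Field F] {M N R P : Polynomial F}

open Classical in
/-- The value at the prime `P` of the multiplicative function equal to `2^(ω(N) - ω(gcd(N, M)))`
when `gcd(N, R) = 1`, and to `0` otherwise. -/
def twoOmegaWeight (M R P : Polynomial F) : ℝ :=
  if P ∈ primeDivisors R then 0 else if P ∈ primeDivisors M then 1 else 2

lemma abs_twoOmegaWeight_sub_one_le : |twoOmegaWeight M R P - 1| ≤ 1 := by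
  unfold twoOmegaWeight
  split_ifs <;> norm_num

lemma twoOmegaWeight_eq_two (hM : M ≠ 0) (hR : R ≠ 0) (hP : P ∉ primeDivisors (M * R)) :
    twoOmegaWeight M R P = 2 := by
  classical
  rw [primeDivisors_mul hM hR, Finset.notMem_union] at hP
  rw [twoOmegaWeight, if_neg hP.2, if_neg hP.1]

lemma omegaP_eq_card_primeDivisors (hN : N ≠ 0) : omegaP N = (primeDivisors N).card := by
  rw [omegaP, ← Set.ncard_coe_finset]
  congr 1
  ext P
  simp [mem_primeDivisors hN]

open Classical in
lemma associated_gcdP (hN : N ≠ 0) : Associated (gcdP N M) (EuclideanDomain.gcd N M) := by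
  have hgcd : EuclideanDomain.gcd N M ≠ 0 := fun h ↦ hN (EuclideanDomain.gcd_eq_zero_iff.1 h).1
  exact associated_unit_mul_left _ _
    (Polynomial.isUnit_C.2 (inv_ne_zero (Polynomial.leadingCoeff_ne_zero.2 hgcd)).isUnit)

lemma gcdP_ne_zero (hN : N ≠ 0) : gcdP N M ≠ 0 := by
  classical
  exact (associated_gcdP hN).ne_zero_iff.2 fun h ↦ hN (EuclideanDomain.gcd_eq_zero_iff.1 h).1

open Classical in
lemma primeDivisors_gcdP (hN : N ≠ 0) (hM : M ≠ 0) :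
    primeDivisors (gcdP N M) = {P ∈ primeDivisors N | P ∈ primeDivisors M} := by
  ext P
  have hdvd : P ∣ EuclideanDomain.gcd N M ↔ P ∣ N ∧ P ∣ M :=
    ⟨fun h ↦ ⟨h.trans (EuclideanDomain.gcd_dvd_left _ _),
      h.trans (EuclideanDomain.gcd_dvd_right _ _)⟩, fun h ↦ EuclideanDomain.dvd_gcd h.1 h.2⟩
  rw [mem_primeDivisors (gcdP_ne_zero hN), Finset.mem_filter, mem_primeDivisors hN,
    mem_primeDivisors hM, (associated_gcdP hN).dvd_iff_dvd_right, hdvd]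
  tauto

open Classical in
lemma primeWeight_twoOmegaWeight (hM : M ≠ 0) (hR : R ≠ 0) (hN : N ≠ 0) :
    primeWeight (twoOmegaWeight M R) N =
      if IsCoprime N R then (2 : ℝ) ^ (omegaP N - omegaP (gcdP N M)) else 0 := by
  split_ifs with h
  · have hNR : ∀ P ∈ primeDivisors N, P ∉ primeDivisors R := fun P hPN hPR ↦
      have hPN := (mem_primeDivisors hN).1 hPN
      hPN.1.2.not_isUnit (h.isUnit_of_dvd' hPN.2 ((mem_primeDivisors hR).1 hPR).2)
    have hcard := Finset.card_filter_add_card_filter_not (s := primeDivisors N)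
      (· ∈ primeDivisors M)
    rw [omegaP_eq_card_primeDivisors hN, omegaP_eq_card_primeDivisors (gcdP_ne_zero hN),
      primeDivisors_gcdP hN hM, ← hcard, Nat.add_sub_cancel_left, primeWeight,
      Finset.prod_congr rfl fun P hP ↦ show twoOmegaWeight M R P = _ from if_neg (hNR P hP),
      Finset.prod_ite, Finset.prod_const_one, one_mul, Finset.prod_const]
  · rw [← EuclideanDomain.gcd_isUnit_iff] at h
    obtain ⟨P, hPm, hPi, hdvd⟩ := Polynomial.exists_monic_irreducible_factor _ h
    have hPN := hdvd.trans (EuclideanDomain.gcd_dvd_left _ _)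
    have hPR := hdvd.trans (EuclideanDomain.gcd_dvd_right _ _)
    exact Finset.prod_eq_zero ((mem_primeDivisors hN).2 ⟨⟨hPm, hPi⟩, hPN⟩)
      (if_pos ((mem_primeDivisors hR).2 ⟨⟨hPm, hPi⟩, hPR⟩))

lemma finsum_monic_natDegree_le [Finite F] {E : Type*} [AddCommMonoid E] (f : Polynomial F → E)
    (z : ℕ) :
    ∑ᶠ N ∈ {N : Polynomial F | N.Monic ∧ N.natDegree ≤ z}, f N =
      ∑ n ∈ Finset.range (z + 1), ∑ N ∈ monics F n, f N := by
  classical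
  have hset : {N : Polynomial F | N.Monic ∧ N.natDegree ≤ z} =
      ↑((Finset.range (z + 1)).biUnion (monics F)) := by
    ext N
    simp [mem_monics, and_comm]
  rw [hset, finsum_mem_coe_finset, Finset.sum_biUnion]
  exact fun m _ n _ hmn ↦ Finset.disjoint_left.2 fun N hm hn ↦
    hmn ((mem_monics.1 hm).2.symm.trans (mem_monics.1 hn).2)

variable [Fintype F]

lemma inv_absP (hN : N ≠ 0) : (absP N)⁻¹ = (Fintype.card F : ℝ)⁻¹ ^ N.natDegree := by
  rw [absP, if_neg hN, inv_pow]

lemma finsum_two_pow_omegaP_eq (hM : M ≠ 0) (hR : R ≠ 0) (z k : ℕ) :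
    ∑ᶠ N ∈ {N : Polynomial F | N.Monic ∧ N.natDegree ≤ z ∧ IsCoprime N R},
        (2 : ℝ) ^ (omegaP N - omegaP (gcdP N M)) / absP N * ((z : ℝ) - N.natDegree) ^ k =
      ∑ n ∈ Finset.range (z + 1), (Fintype.card F : ℝ)⁻¹ ^ n *
        (∑ N ∈ monics F n, primeWeight (twoOmegaWeight M R) N) * ((z - n : ℕ) : ℝ) ^ k := by
  have hweight : ∑ᶠ N ∈ {N : Polynomial F | N.Monic ∧ N.natDegree ≤ z ∧ IsCoprime N R},
      (2 : ℝ) ^ (omegaP N - omegaP (gcdP N M)) / absP N * ((z : ℝ) - N.natDegree) ^ k =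
        ∑ᶠ N ∈ {N : Polynomial F | N.Monic ∧ N.natDegree ≤ z},
          primeWeight (twoOmegaWeight M R) N * (absP N)⁻¹ * ((z : ℝ) - N.natDegree) ^ k := by
    classical
    refine finsum_congr fun N ↦ ?_
    simp only [finsum_eq_if, Set.mem_ofPred_eq]
    by_cases hN : N.Monic
    · rw [primeWeight_twoOmegaWeight hM hR hN.ne_zero, div_eq_mul_inv]
      by_cases h : IsCoprime N R <;> simp [h]
    · simp [hN]
  rw [hweight, finsum_monic_natDegree_le]
  refine Finset.sum_congr rfl fun n hn ↦ ?_
  rw [Nat.cast_sub (Nat.lt_succ_iff.1 (Finset.mem_range.1 hn)), Finset.mul_sum, Finset.sum_mul]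
  refine Finset.sum_congr rfl fun N hN ↦ ?_
  obtain ⟨hmonic, rfl⟩ := mem_monics.1 hN
  rw [inv_absP hmonic.ne_zero, mul_comm (primeWeight _ _)]

lemma eulerConstant_twoOmegaWeight (hM : M ≠ 0) (hR : R ≠ 0) :
    eulerConstant (twoOmegaWeight M R) (primeDivisors (M * R)) =
      (1 - (Fintype.card F : ℝ)⁻¹) *
        (∏ᶠ P ∈ {P : Polynomial F | IsMonicPrime P ∧ P ∣ M * R},
          ((1 - (absP P)⁻¹) / (1 + (absP P)⁻¹))) *
        ∏ᶠ P ∈ {P : Polynomial F | IsMonicPrime P ∧ P ∣ M ∧ ¬ P ∣ R}, (1 - (absP P)⁻¹)⁻¹ := by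
  classical
  have hset : {P : Polynomial F | IsMonicPrime P ∧ P ∣ M * R} = primeDivisors (M * R) := by
    ext P
    simp [mem_primeDivisors (mul_ne_zero hM hR)]
  have hset' : {P : Polynomial F | IsMonicPrime P ∧ P ∣ M ∧ ¬ P ∣ R} =
      ({P ∈ primeDivisors (M * R) | P ∉ primeDivisors R} : Finset _) := by
    ext P
    simp only [Set.mem_ofPred_eq, Finset.coe_filter, primeDivisors_mul hM hR, Finset.mem_union,
      mem_primeDivisors hM, mem_primeDivisors hR]
    tauto
  rw [hset, hset', finprod_mem_coe_finset, finprod_mem_coe_finset, Finset.prod_filter, mul_assoc,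
    ← Finset.prod_mul_distrib, eulerConstant]
  congr 1
  refine Finset.prod_congr rfl fun P hPMR ↦ ?_
  have hP := (mem_primeDivisors (mul_ne_zero hM hR)).1 hPMR
  rw [primeDivisors_mul hM hR] at hPMR
  rw [inv_absP hP.1.1.ne_zero, twoOmegaWeight]
  by_cases hPR : P ∈ primeDivisors R
  · rw [if_pos hPR, if_neg (not_not.2 hPR)]
    ring
  · have hPM : P ∈ primeDivisors M := (Finset.mem_union.1 hPMR).resolve_right hPR
    have hx : 1 - (Fintype.card F : ℝ)⁻¹ ^ P.natDegree ≠ 0 := by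
      linarith [hP.1.inv_card_pow_le_half]
    rw [if_neg hPR, if_pos hPM, if_pos hPR, sub_self, zero_mul, add_zero, div_mul_eq_mul_div,
      mul_inv_cancel₀ hx]

lemma factorial_div_factorial_add_two (k : ℕ) :
    (k.factorial : ℝ) / (k + 2).factorial = (((k : ℝ) + 2) * (k + 1))⁻¹ := by
  have hk : (k.factorial : ℝ) ≠ 0 := by positivity
  rw [Nat.factorial_succ, Nat.factorial_succ]
  push_cast
  field_simp
  ring

theorem weighted_two_omega_sum_general (F : Type) [Field F] [Fintype F] (k c : ℕ) :
    ∃ C : ℝ, 0 < C ∧ ∀ (R M : Polynomial F) (z : ℕ), M ≠ 0 →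
      M.natDegree ≤ R.natDegree → 2 ≤ R.natDegree → R.natDegree ≤ c * z →
      let main : ℝ :=
        (1 - (Fintype.card F : ℝ)⁻¹) / (((k : ℝ) + 2) * ((k : ℝ) + 1)) *
          (∏ᶠ P ∈ {P : Polynomial F | IsMonicPrime P ∧ P ∣ M * R},
            ((1 - (absP P)⁻¹) / (1 + (absP P)⁻¹))) *
          ∏ᶠ P ∈ {P : Polynomial F | IsMonicPrime P ∧ P ∣ M ∧ ¬ P ∣ R}, (1 - (absP P)⁻¹)⁻¹
      |(∑ᶠ N ∈ {N : Polynomial F | N.Monic ∧ N.natDegree ≤ z ∧ IsCoprime N R},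
          (2 : ℝ) ^ (omegaP N - omegaP (gcdP N M)) / absP N *
            ((z : ℝ) - (N.natDegree : ℝ)) ^ k) - main * (z : ℝ) ^ (k + 2)| ≤
        C * main * (z : ℝ) ^ (k + 1) * Real.log (R.natDegree : ℝ) := by
  obtain ⟨C, hC0, hC⟩ := exists_abs_sum_primeWeight_mul_pow_sub_le F k c
  refine ⟨C * (((k : ℝ) + 2) * (k + 1)), by positivity, fun R M z hM hdeg hR2 hRz ↦ ?_⟩
  have hR : R ≠ 0 := Polynomial.ne_zero_of_natDegree_gt hR2
  have hMR : M * R ≠ 0 := mul_ne_zero hM hR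
  have hsum : ∑ P ∈ primeDivisors (M * R), P.natDegree ≤ 2 * R.natDegree := by
    have h := sum_natDegree_primeDivisors_le hMR
    rw [Polynomial.natDegree_mul hM hR] at h
    omega
  have hbound := hC (fun P hP ↦ ((mem_primeDivisors hMR).1 hP).1)
    (fun P _ ↦ abs_twoOmegaWeight_sub_one_le)
    (fun P ↦ twoOmegaWeight_eq_two hM hR) hR2 hsum hRz
  rw [← finsum_two_pow_omegaP_eq hM hR, eulerConstant_twoOmegaWeight hM hR,
    factorial_div_factorial_add_two] at hbound
  convert hbound using 1
  · congr 2
    ring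
  · field_simp

lemma eventually_le_two_mul_of_tendsto_div_one {a z : ℕ → ℕ} (ha : Tendsto a atTop atTop)
    (hz : Tendsto (fun n ↦ (z n : ℝ) / a n) atTop (nhds 1)) : ∀ᶠ n in atTop, a n ≤ 2 * z n := by
  filter_upwards [hz.eventually_const_lt one_half_lt_one, ha.eventually_gt_atTop 0] with n hn hn0
  rw [lt_div_iff₀ (Nat.cast_pos.2 hn0)] at hn
  have h : (a n : ℝ) ≤ 2 * z n := by linarith
  exact_mod_cast h

end TwoOmegaWeight

/-- **Weighted sum of `2^{ω(N)-ω(gcd(N,M))}`.** For `deg M ≤ deg R`, `k ≥ 0` and `z`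
an integer-valued function of `R` with `z ∼ deg R`, as `deg R → ∞`,
`∑_{deg N ≤ z, (N,R)=1} 2^{ω(N)-ω((N,M))}/|N| (z - deg N)^k` equals
`(1-q⁻¹)/((k+2)(k+1)) ∏_{P ∣ MR} (1-|P|⁻¹)/(1+|P|⁻¹) ∏_{P ∣ M, P ∤ R} (1-|P|⁻¹)⁻¹ ·
(z^{k+2} + O_k(z^{k+1} log deg R))`. -/
theorem weighted_two_omega_sum
    (Fq : Type) [Field Fq] [Fintype Fq] (k : ℕ)
    (Rseq Mseq : ℕ → Polynomial Fq) (zseq : ℕ → ℕ)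
    (hRmonic : ∀ n, (Rseq n).Monic) (hMmonic : ∀ n, (Mseq n).Monic)
    (hdeg : ∀ n, (Mseq n).natDegree ≤ (Rseq n).natDegree)
    (hRtend : Filter.Tendsto (fun n => (Rseq n).natDegree) Filter.atTop Filter.atTop)
    (hz : Filter.Tendsto (fun n => (zseq n : ℝ) / ((Rseq n).natDegree : ℝ))
      Filter.atTop (nhds 1)) :
    let main : ℕ → ℝ := fun n =>
      (1 - (Fintype.card Fq : ℝ)⁻¹) / (((k : ℝ) + 2) * ((k : ℝ) + 1)) *
        (∏ᶠ P ∈ {P : Polynomial Fq | IsMonicPrime P ∧ P ∣ Mseq n * Rseq n},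
          ((1 - (absP P)⁻¹) / (1 + (absP P)⁻¹))) *
        ∏ᶠ P ∈ {P : Polynomial Fq | IsMonicPrime P ∧ P ∣ Mseq n ∧ ¬ P ∣ Rseq n},
          (1 - (absP P)⁻¹)⁻¹
    ∃ C : ℝ, 0 < C ∧ ∀ᶠ n in Filter.atTop,
      |(∑ᶠ N ∈ {N : Polynomial Fq | N.Monic ∧ N.natDegree ≤ zseq n ∧ IsCoprime N (Rseq n)},
          (2 : ℝ) ^ (omegaP N - omegaP (gcdP N (Mseq n))) / absP N *
            ((zseq n : ℝ) - (N.natDegree : ℝ)) ^ k) -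
        main n * (zseq n : ℝ) ^ (k + 2)| ≤
      C * main n * (zseq n : ℝ) ^ (k + 1) * Real.log ((Rseq n).natDegree : ℝ) := by
  obtain ⟨C, hC0, hC⟩ := weighted_two_omega_sum_general Fq k 2
  refine ⟨C, hC0, ?_⟩
  filter_upwards [hRtend.eventually_ge_atTop 2,
    eventually_le_two_mul_of_tendsto_div_one hRtend hz] with n hn hn'
  exact hC _ _ _ (hMmonic n).ne_zero (hdeg n) hn hn'

end FFEH
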